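/- arXiv:1311.4859 — 4 statements merged into one kernel-verified Lean document; each statement's English description precedes it below -/
import Mathlib

section
/- Let G₁ be a nucleation-free graph with an implied non-edge {a₁,b₁} and G₂ a nucleation-free graph with an implied non-edge {a₂,b₂}, and let G be obtained from the disjoint union of G₁ and G₂ by identifying a₁ with a₂ and b₁ with b₂. Then G is nucleation-free and dependent in ℝ³, i.e., rk₃(G) < |E(G)|. -/
/-!
The rigidity rows depend linearly on the framework, so linear independence of a given family of rows
is the nonvanishing of a polynomial. This is used in the following form: on any line in the space of
frameworks, independence holds at all but finitely many points as soon as it holds at one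
(`linInd_line`, `LineGeneric`). Hence finitely many such conditions that are separately satisfiable
can be realised by one framework (`LineGeneric.exists_and`).

*Dependence.* Take a framework at which `G` and both parts attain their generic ranks and the two
glued vertices `a`, `b` are placed at different points. Since `ab` is an implied non-edge on both
sides, its row is a nonzero vector in the row spaces of both parts. So these row spaces intersect
nontrivially, and the rank of `G` is at most `|E₁| + |E₂| - 1 = |E| - 1`.

*Nucleation-freeness.* For a vertex set `S` of size at least `5` with traces `S₁`, `S₂` of sizes
`n₁`, `n₂`, the rank of `G[S]` is at most the sum of the ranks of `G₁[S₁]` and `G₂[S₂]`, and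
`|S| = n₁ + n₂ - k` with `k ≤ 2` common vertices. A graph on `n ≥ 3` vertices has rank at most
`3n - 6` because the row space is orthogonal to the infinitesimal rigid motions
(`genRank_add_six`). When `n₁, n₂ ≥ 3` this gives less than `3|S| - 6` for `k ≤ 1`, and exactly
`3|S| - 6` for `k = 2`; the latter would need both traces to be rigid, but each of them contains the
non-edge `ab` and is therefore not rigid (`genRank_induce_bounds`). If one trace has at most two
vertices, its rank is at most `1`, and `0` when it is `{a, b}`; either `S` lies in the other part,
which is nucleation-free, or the same count is again strict.
-/

open SimpleGraph

variable {V : Type*}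

/-- The rigidity row of an (ordered) pair of vertices at a framework `p`. -/
def rigidityRow [DecidableEq V] (p : V → Fin 3 → ℝ) (i j : V) : V → Fin 3 → ℝ :=
  fun k => if k = i then p i - p j else if k = j then p j - p i else 0

/-- The rank of the rigidity rows of `G` at `p`. -/
noncomputable def rankAt [DecidableEq V] (G : SimpleGraph V) (p : V → Fin 3 → ℝ) : ℕ :=
  Module.finrank ℝ (Submodule.span ℝ
    {w : V → Fin 3 → ℝ | ∃ i j, G.Adj i j ∧ w = rigidityRow p i j})

/-- generic 3-dimensional rank of a graph. -/
noncomputable def genRank [DecidableEq V] (G : SimpleGraph V) : ℕ :=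
  sSup {n : ℕ | ∃ p : V → Fin 3 → ℝ, n = rankAt G p}

noncomputable def numEdges (G : SimpleGraph V) : ℕ := G.edgeSet.ncard

def IsIndependent [DecidableEq V] (G : SimpleGraph V) : Prop := genRank G = numEdges G

def NucleationFree [DecidableEq V] (G : SimpleGraph V) : Prop :=
  ∀ S : Finset V, 5 ≤ S.card → genRank (G.induce (S : Set V)) ≠ 3 * S.card - 6

def addEdge (G : SimpleGraph V) (x y : V) : SimpleGraph V :=
  G ⊔ SimpleGraph.fromEdgeSet {s(x, y)}

def IsImpliedNonEdge [DecidableEq V] (G : SimpleGraph V) (x y : V) : Prop :=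
  x ≠ y ∧ ¬ G.Adj x y ∧ genRank (addEdge G x y) = genRank G

/-- `G` (on vertex type `W`) is obtained by gluing `G₁` and `G₂` along the embeddings
`f` and `g`. -/
structure IsGlue {V₁ V₂ W : Type*} (G₁ : SimpleGraph V₁) (G₂ : SimpleGraph V₂)
    (G : SimpleGraph W) (f : V₁ → W) (g : V₂ → W) : Prop where
  f_inj : Function.Injective f
  g_inj : Function.Injective g
  cover : ∀ w, (∃ x, f x = w) ∨ (∃ y, g y = w)
  adj_iff : ∀ w w', G.Adj w w' ↔
    ((∃ x x', f x = w ∧ f x' = w' ∧ G₁.Adj x x') ∨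
     (∃ y y', g y = w ∧ g y' = w' ∧ G₂.Adj y y'))

/-! ### Properties that are generic along lines -/

/-- Linear independence of vectors depending linearly on a parameter is a generic condition along
lines: if it holds at one point of a line, it fails at only finitely many points of that line.
After composing with a dual basis, the determinant of the coordinate matrix is a polynomial in the
line parameter that is nonzero at `0`. -/
lemma linInd_line {ι E F : Type*} [Fintype ι] [AddCommGroup E] [Module ℝ E]
    [AddCommGroup F] [Module ℝ F] (L : ι → E →ₗ[ℝ] F) (p d : E)
    (h : LinearIndependent ℝ fun i => L i p) :
    {t : ℝ | ¬ LinearIndependent ℝ fun i => L i (p + t • d)}.Finite := by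
  classical
  obtain ⟨φ, hφ⟩ := LinearMap.exists_leftInverse_of_injective
    (Fintype.linearCombination ℝ fun i => L i p)
    (LinearMap.ker_eq_bot.2 h.fintypeLinearCombination_injective)
  have hφ1 : ∀ i, φ (L i p) = Pi.single i 1 := by
    intro i
    have := LinearMap.congr_fun hφ (Pi.single i 1)
    simpa [Fintype.linearCombination_apply_single] using this
  let B : Matrix ι ι ℝ := fun i j => φ (L i d) j
  let P : Polynomial ℝ :=
    Matrix.det (1 + (Polynomial.X : Polynomial ℝ) • B.map Polynomial.C)
  have hP : ∀ t, P.eval t = Matrix.det (1 + t • B) := by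
    intro t
    simp only [P, ← Polynomial.coe_evalRingHom, RingHom.map_det]
    congr 1
    ext i j
    by_cases hij : i = j <;> simp [hij] <;> ring
  have hP0 : P ≠ 0 := by
    intro h0
    have := hP 0
    simp [h0] at this
  refine (Polynomial.finite_setOfPred_isRoot hP0).subset ?_
  intro t ht
  by_contra hne
  apply ht
  have hdet : Matrix.det (1 + t • B) ≠ 0 := by
    rw [← hP]; exact hne
  have hr := Matrix.linearIndependent_rows_of_det_ne_zero hdet
  refine LinearIndependent.of_comp φ ?_
  have hrow : (φ ∘ fun i => L i (p + t • d)) = (1 + t • B).row := by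
    funext i
    ext j
    have hB : (t • B) i j = t * φ (L i d) j := rfl
    simp [hφ1, Matrix.row, Matrix.one_apply, Pi.single_apply, hB, eq_comm]
  rw [hrow]
  exact hr

/-- A property of points of a real vector space is generic along lines if, on every line, it holds
at all but finitely many points as soon as it holds at one. -/
def LineGeneric {E : Type*} [AddCommGroup E] [Module ℝ E] (P : E → Prop) : Prop :=
  ∀ p, P p → ∀ d, {t : ℝ | ¬ P (p + t • d)}.Finite

lemma LineGeneric.and {E : Type*} [AddCommGroup E] [Module ℝ E] {P Q : E → Prop}
    (hP : LineGeneric P) (hQ : LineGeneric Q) : LineGeneric fun p => P p ∧ Q p := by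
  intro p hp d
  refine ((hP p hp.1 d).union (hQ p hp.2 d)).subset ?_
  intro t ht
  by_cases h : P (p + t • d)
  · exact Or.inr fun h' => ht ⟨h, h'⟩
  · exact Or.inl h

/-- Two line-generic properties that are each satisfiable are simultaneously satisfiable: consider
the line through a witness of each. -/
lemma LineGeneric.exists_and {E : Type*} [AddCommGroup E] [Module ℝ E] {P Q : E → Prop}
    (hP : LineGeneric P) (hQ : LineGeneric Q) (h₁ : ∃ p, P p) (h₂ : ∃ p, Q p) :
    ∃ p, P p ∧ Q p := by
  obtain ⟨p, hp⟩ := h₁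
  obtain ⟨q, hq⟩ := h₂
  have hA := hP p hp (q - p)
  have hB := (hQ q hq (p - q)).image fun t => 1 - t
  obtain ⟨t, ht⟩ := (hA.union hB).exists_notMem
  refine ⟨p + t • (q - p), ?_, ?_⟩
  · by_contra h
    exact ht (Or.inl h)
  · by_contra h
    refine ht (Or.inr ⟨1 - t, ?_, by simp⟩)
    have : q + (1 - t) • (p - q) = p + t • (q - p) := by module
    simpa [this] using h

/-! ### Row spaces and generic rank -/

lemma rigidityRow_eq {V : Type*} [DecidableEq V] (p : V → Fin 3 → ℝ) (i j : V) :
    rigidityRow p i j = Pi.single i (p i - p j) - Pi.single j (p i - p j) := by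
  funext k
  by_cases hij : i = j
  · subst hij; simp [rigidityRow]
  · by_cases hi : k = i
    · subst hi; simp [rigidityRow, hij]
    · by_cases hj : k = j
      · subst hj; simp [rigidityRow, hi]
      · simp [rigidityRow, hi, hj]

/-- The rigidity row of a fixed pair, as a linear map of the framework. -/
def rowMap {V : Type*} [DecidableEq V] (i j : V) : (V → Fin 3 → ℝ) →ₗ[ℝ] (V → Fin 3 → ℝ) where
  toFun p := rigidityRow p i j
  map_add' p q := by
    funext k
    simp only [rigidityRow, Pi.add_apply]
    split_ifs <;> simp only [add_zero, add_sub_add_comm]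
  map_smul' c p := by
    funext k
    simp only [rigidityRow, Pi.smul_apply, RingHom.id_apply]
    split_ifs <;> simp [smul_sub]

/-- The row space of the rigidity matrix of `G` at `p`. -/
def rowSpan {V : Type*} [DecidableEq V] (G : SimpleGraph V) (p : V → Fin 3 → ℝ) :
    Submodule ℝ (V → Fin 3 → ℝ) :=
  Submodule.span ℝ {w | ∃ i j, G.Adj i j ∧ w = rigidityRow p i j}

lemma rankAt_eq {V : Type*} [DecidableEq V] (G : SimpleGraph V) (p : V → Fin 3 → ℝ) :
    rankAt G p = Module.finrank ℝ (rowSpan G p) := rfl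

lemma rowSpan_mono {V : Type*} [DecidableEq V] {G H : SimpleGraph V} (h : G ≤ H)
    (p : V → Fin 3 → ℝ) : rowSpan G p ≤ rowSpan H p := by
  apply Submodule.span_mono
  rintro w ⟨i, j, hij, rfl⟩
  exact ⟨i, j, h hij, rfl⟩

lemma rowSpan_sup {V : Type*} [DecidableEq V] (G H : SimpleGraph V)
    (p : V → Fin 3 → ℝ) : rowSpan (G ⊔ H) p = rowSpan G p ⊔ rowSpan H p := by
  apply le_antisymm
  · apply Submodule.span_le.2
    rintro w ⟨i, j, hij | hij, rfl⟩
    · exact Submodule.mem_sup_left (Submodule.subset_span ⟨i, j, hij, rfl⟩)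
    · exact Submodule.mem_sup_right (Submodule.subset_span ⟨i, j, hij, rfl⟩)
  · exact sup_le (rowSpan_mono le_sup_left p) (rowSpan_mono le_sup_right p)

lemma lineGeneric_rankAt {V : Type*} [Fintype V] [DecidableEq V] (G : SimpleGraph V) (r : ℕ) :
    LineGeneric fun p => r ≤ rankAt G p := by
  intro p hp d
  obtain ⟨e, he, -, hli⟩ := Submodule.exists_fun_fin_finrank_span_eq ℝ
    {w : V → Fin 3 → ℝ | ∃ i j, G.Adj i j ∧ w = rigidityRow p i j}
  choose i j hadj hrow using he
  refine (linInd_line (fun k => rowMap (i k) (j k)) p d ?_).subset ?_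
  · have heq : (fun k => rowMap (i k) (j k) p) = e := funext fun k => (hrow k).symm
    rw [heq]
    exact hli
  · intro t ht hli'
    apply ht
    have hle : Submodule.span ℝ (Set.range fun k => rowMap (i k) (j k) (p + t • d)) ≤
        rowSpan G (p + t • d) := by
      apply Submodule.span_mono
      rintro _ ⟨k, rfl⟩
      exact ⟨i k, j k, hadj k, rfl⟩
    have := Submodule.finrank_mono hle
    rw [finrank_span_eq_card hli', Fintype.card_fin] at this
    exact le_trans hp this

lemma bddAbove_rank {V : Type*} [Fintype V] [DecidableEq V] (G : SimpleGraph V) :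
    BddAbove {n : ℕ | ∃ p : V → Fin 3 → ℝ, n = rankAt G p} := by
  refine ⟨Module.finrank ℝ (V → Fin 3 → ℝ), ?_⟩
  rintro n ⟨p, rfl⟩
  exact Submodule.finrank_le _

lemma rankAt_le_genRank {V : Type*} [Fintype V] [DecidableEq V] (G : SimpleGraph V)
    (p : V → Fin 3 → ℝ) : rankAt G p ≤ genRank G :=
  le_csSup (bddAbove_rank G) ⟨p, rfl⟩

lemma exists_genRank {V : Type*} [Fintype V] [DecidableEq V] (G : SimpleGraph V) :
    ∃ p : V → Fin 3 → ℝ, genRank G ≤ rankAt G p := by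
  obtain ⟨p, hp⟩ := Nat.sSup_mem (s := {n : ℕ | ∃ p : V → Fin 3 → ℝ, n = rankAt G p})
    ⟨_, 0, rfl⟩ (bddAbove_rank G)
  exact ⟨p, hp.le⟩

lemma rankAt_le_numEdges {V : Type*} [Fintype V] [DecidableEq V] (G : SimpleGraph V)
    (p : V → Fin 3 → ℝ) : rankAt G p ≤ numEdges G := by
  classical
  have hsym : ∀ i j, rigidityRow p i j = rigidityRow p j i := by
    intro i j
    rw [rigidityRow_eq, rigidityRow_eq, ← neg_sub (p i) (p j), Pi.single_neg, Pi.single_neg]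
    abel
  let F : Sym2 V → V → Fin 3 → ℝ := Sym2.lift ⟨rigidityRow p, hsym⟩
  have hset : {w : V → Fin 3 → ℝ | ∃ i j, G.Adj i j ∧ w = rigidityRow p i j} =
      ((G.edgeSet.toFinite.toFinset.image F : Finset _) : Set (V → Fin 3 → ℝ)) := by
    ext w
    simp only [Set.mem_ofPred_eq, Finset.coe_image, Set.Finite.coe_toFinset, Set.mem_image]
    constructor
    · rintro ⟨i, j, hij, rfl⟩
      exact ⟨s(i, j), hij, rfl⟩
    · rintro ⟨e, he, rfl⟩
      induction e with
      | h i j => exact ⟨i, j, he, rfl⟩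
  rw [rankAt, hset]
  refine (finrank_span_finset_le_card _).trans (Finset.card_image_le.trans ?_)
  rw [numEdges, Set.ncard_eq_toFinset_card _ G.edgeSet.toFinite]

lemma genRank_le_numEdges {V : Type*} [Fintype V] [DecidableEq V] (G : SimpleGraph V) :
    genRank G ≤ numEdges G := by
  obtain ⟨p, hp⟩ := exists_genRank G
  exact hp.trans (rankAt_le_numEdges G p)

lemma genRank_mono {V : Type*} [Fintype V] [DecidableEq V] {G H : SimpleGraph V} (h : G ≤ H) :
    genRank G ≤ genRank H := by
  obtain ⟨p, hp⟩ := exists_genRank G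
  exact hp.trans ((Submodule.finrank_mono (rowSpan_mono h p)).trans (rankAt_le_genRank H p))

lemma genRank_sup_le {V : Type*} [Fintype V] [DecidableEq V] (G H : SimpleGraph V) :
    genRank (G ⊔ H) ≤ genRank G + genRank H := by
  obtain ⟨p, hp⟩ := exists_genRank (G ⊔ H)
  refine hp.trans ?_
  rw [rankAt_eq, rowSpan_sup]
  exact (Submodule.finrank_add_le_finrank_add_finrank _ _).trans
    (add_le_add (rankAt_le_genRank G p) (rankAt_le_genRank H p))

/-! ### Invariance under injective relabelling of vertices -/

/-- Extension of a velocity assignment by zero along an injection of the vertex sets. -/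
noncomputable def extZero {X Y : Type*} (φ : X ↪ Y) :
    (X → Fin 3 → ℝ) →ₗ[ℝ] (Y → Fin 3 → ℝ) where
  toFun w := Function.extend φ w 0
  map_add' u v := by simpa using Function.extend_add φ u v 0 0
  map_smul' c u := by simpa using Function.extend_smul c φ u 0

lemma extZero_injective {X Y : Type*} (φ : X ↪ Y) : Function.Injective (extZero φ) :=
  Function.extend_injective φ.injective _

lemma extZero_row {X Y : Type*} [DecidableEq X] [DecidableEq Y] (φ : X ↪ Y)
    (p : Y → Fin 3 → ℝ) (i j : X) :
    extZero φ (rigidityRow (p ∘ φ) i j) = rigidityRow p (φ i) (φ j) := by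
  funext y
  by_cases hy : ∃ x, φ x = y
  · obtain ⟨x, rfl⟩ := hy
    simp [extZero, φ.injective.extend_apply, rigidityRow]
  · have hi : y ≠ φ i := fun h => hy ⟨i, h.symm⟩
    have hj : y ≠ φ j := fun h => hy ⟨j, h.symm⟩
    simp [extZero, Function.extend_apply' _ _ _ hy, rigidityRow, hi, hj]

lemma rowSpan_map {X Y : Type*} [DecidableEq X] [DecidableEq Y] (φ : X ↪ Y)
    (H : SimpleGraph X) (p : Y → Fin 3 → ℝ) :
    rowSpan (H.map φ) p = (rowSpan H (p ∘ φ)).map (extZero φ) := by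
  rw [rowSpan, rowSpan, Submodule.map_span]
  congr 1
  ext w
  simp only [Set.mem_ofPred_eq, Set.mem_image, SimpleGraph.map_adj]
  constructor
  · rintro ⟨_, _, ⟨i, j, hij, rfl, rfl⟩, rfl⟩
    exact ⟨_, ⟨i, j, hij, rfl⟩, extZero_row φ p i j⟩
  · rintro ⟨_, ⟨i, j, hij, rfl⟩, rfl⟩
    exact ⟨_, _, ⟨i, j, hij, rfl, rfl⟩, extZero_row φ p i j⟩

lemma rankAt_map {X Y : Type*} [DecidableEq X] [DecidableEq Y] (φ : X ↪ Y)
    (H : SimpleGraph X) (p : Y → Fin 3 → ℝ) :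
    rankAt (H.map φ) p = rankAt H (p ∘ φ) := by
  rw [rankAt_eq, rankAt_eq, rowSpan_map]
  exact (Submodule.equivMapOfInjective _ (extZero_injective φ) _).finrank_eq.symm

lemma genRank_map {X Y : Type*} [Fintype X] [Fintype Y] [DecidableEq X] [DecidableEq Y]
    (φ : X ↪ Y) (H : SimpleGraph X) : genRank (H.map φ) = genRank H := by
  apply le_antisymm
  · obtain ⟨p, hp⟩ := exists_genRank (H.map φ)
    rw [rankAt_map] at hp
    exact hp.trans (rankAt_le_genRank _ _)
  · obtain ⟨q, hq⟩ := exists_genRank H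
    have : Function.extend φ q 0 ∘ φ = q := funext fun x => φ.injective.extend_apply _ _ _
    refine hq.trans ?_
    rw [← this, ← rankAt_map]
    exact rankAt_le_genRank _ _

/-! ### Infinitesimal rigid motions and the bound `3n - 6` -/

/-- The velocity field `v ↦ t + ω × p v` of an infinitesimal rigid motion with translation part
`t = q.1` and angular velocity `ω = q.2`. -/
def motion {V : Type*} (p : V → Fin 3 → ℝ) :
    ((Fin 3 → ℝ) × (Fin 3 → ℝ)) →ₗ[ℝ] (V → Fin 3 → ℝ) where
  toFun q v := q.1 + crossProduct q.2 (p v)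
  map_add' q q' := by
    funext v
    simp only [Prod.fst_add, Prod.snd_add, map_add, LinearMap.add_apply, Pi.add_apply]
    abel
  map_smul' c q := by
    funext v
    simp [smul_add]

/-- If three of the points are not collinear, only the zero infinitesimal rigid motion vanishes at
all points. -/
lemma motion_injective {V : Type*} (p : V → Fin 3 → ℝ) (x y z : V)
    (h : LinearIndependent ℝ ![p x - p z, p y - p z]) : Function.Injective (motion p) := by
  rw [← LinearMap.ker_eq_bot, LinearMap.ker_eq_bot']
  rintro ⟨t, ω⟩ hq
  have hv : ∀ v, t + crossProduct ω (p v) = 0 := fun v => congr_fun hq v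
  have hd : ∀ v, crossProduct ω (p v - p z) = 0 := by
    intro v
    rw [map_sub, sub_eq_zero]
    exact add_left_cancel ((hv v).trans (hv z).symm)
  -- `ω` is parallel to both difference vectors, hence zero
  have hω : ω = 0 := by
    by_contra hω
    have key : ∀ u : Fin 3 → ℝ, crossProduct ω u = 0 → ∃ c : ℝ, c • ω = u := by
      intro u hu
      by_contra hne
      push Not at hne
      exact (crossProduct_ne_zero_iff_linearIndependent.2
        ((LinearIndependent.pair_iff' hω).2 hne)) hu
    obtain ⟨c, hc⟩ := key _ (hd x)
    obtain ⟨c', hc'⟩ := key _ (hd y)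
    apply crossProduct_ne_zero_iff_linearIndependent.2 h
    rw [← hc, ← hc']
    simp [cross_self]
  have := hv z
  rw [hω] at this ⊢
  simpa using this

lemma row_dot_motion {V : Type*} [Fintype V] [DecidableEq V] (p : V → Fin 3 → ℝ) (i j : V)
    (q : (Fin 3 → ℝ) × (Fin 3 → ℝ)) :
    ∑ v, rigidityRow p i j v ⬝ᵥ motion p q v = 0 := by
  have hs : ∀ (k : V) (w : Fin 3 → ℝ),
      ∑ v, (Pi.single k w : V → Fin 3 → ℝ) v ⬝ᵥ motion p q v = w ⬝ᵥ motion p q k := by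
    intro k w
    rw [Finset.sum_eq_single k]
    · simp
    · intro v _ hv
      simp [hv]
    · simp
  rw [rigidityRow_eq]
  simp only [Pi.sub_apply, sub_dotProduct, Finset.sum_sub_distrib, hs]
  rw [← sub_dotProduct, ← sub_dotProduct, ← dotProduct_sub]
  have : motion p q i - motion p q j = crossProduct q.2 (p i - p j) := by
    simp [motion]
  rw [this, dot_cross_self]

/-- The row space is orthogonal to the infinitesimal rigid motions, which form a `6`-dimensional
space at a framework with three non-collinear points. -/
lemma rankAt_add_six {V : Type*} [Fintype V] [DecidableEq V] (G : SimpleGraph V)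
    (p : V → Fin 3 → ℝ) (x y z : V)
    (h : LinearIndependent ℝ ![p x - p z, p y - p z]) :
    rankAt G p + 6 ≤ 3 * Fintype.card V := by
  have horth : ∀ w ∈ rowSpan G p, ∀ q, ∑ v, w v ⬝ᵥ motion p q v = 0 := by
    intro w hw q
    induction hw using Submodule.span_induction with
    | mem w hw =>
      obtain ⟨i, j, -, rfl⟩ := hw
      exact row_dot_motion p i j q
    | zero => simp
    | add a b _ _ ha hb => simp [add_dotProduct, Finset.sum_add_distrib, ha, hb]
    | smul c a _ ha => simp [← Finset.mul_sum, ha]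
  have hdisj : rowSpan G p ⊓ LinearMap.range (motion p) = ⊥ := by
    rw [eq_bot_iff]
    rintro w ⟨hw, q, rfl⟩
    have h0 := horth _ hw q
    rw [Finset.sum_eq_zero_iff_of_nonneg] at h0
    · rw [Submodule.mem_bot]
      funext v
      exact dotProduct_self_eq_zero.1 (h0 v (Finset.mem_univ v))
    · intro v _
      exact Finset.sum_nonneg fun k _ => mul_self_nonneg _
  have h6 : Module.finrank ℝ (LinearMap.range (motion p)) = 6 := by
    rw [LinearMap.finrank_range_of_inj (motion_injective p x y z h)]
    simp
  have hsum := Submodule.finrank_sup_add_finrank_inf_eq (rowSpan G p)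
    (LinearMap.range (motion p))
  rw [hdisj, finrank_bot, h6, add_zero] at hsum
  have hle := Submodule.finrank_le (rowSpan G p ⊔ LinearMap.range (motion p))
  have hV : Module.finrank ℝ (V → Fin 3 → ℝ) = 3 * Fintype.card V := by
    rw [Module.finrank_pi_fintype]
    simp [mul_comm]
  rw [rankAt_eq]
  omega

lemma lineGeneric_noncollinear {V : Type*} (x y z : V) :
    LineGeneric fun p : V → Fin 3 → ℝ => LinearIndependent ℝ ![p x - p z, p y - p z] := by
  intro p hp d
  let D : V → (V → Fin 3 → ℝ) →ₗ[ℝ] (Fin 3 → ℝ) := fun v =>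
    LinearMap.proj (R := ℝ) (φ := fun _ => Fin 3 → ℝ) v -
      LinearMap.proj (R := ℝ) (φ := fun _ => Fin 3 → ℝ) z
  have hD : ∀ p : V → Fin 3 → ℝ,
      (fun i => (![D x, D y] : Fin 2 → _) i p) = ![p x - p z, p y - p z] := by
    intro p
    funext i
    fin_cases i <;> rfl
  have := linInd_line ![D x, D y] p d (by rw [hD]; exact hp)
  simpa only [hD] using this

lemma lineGeneric_ne {V : Type*} (x y : V) :
    LineGeneric fun p : V → Fin 3 → ℝ => p x - p y ≠ 0 := by
  intro p hp d
  let D : (V → Fin 3 → ℝ) →ₗ[ℝ] (Fin 3 → ℝ) :=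
    LinearMap.proj (R := ℝ) (φ := fun _ => Fin 3 → ℝ) x -
      LinearMap.proj (R := ℝ) (φ := fun _ => Fin 3 → ℝ) y
  have := linInd_line (fun _ : Unit => D) p d (by rw [linearIndependent_unique_iff]; exact hp)
  simp only [linearIndependent_unique_iff] at this
  exact this

lemma genRank_add_six {V : Type*} [Fintype V] [DecidableEq V] (G : SimpleGraph V)
    (h3 : 3 ≤ Fintype.card V) : genRank G + 6 ≤ 3 * Fintype.card V := by
  obtain ⟨x, y, z, hxy, hxz, hyz⟩ := Fintype.two_lt_card_iff.1 h3
  have hw : ∃ p : V → Fin 3 → ℝ, LinearIndependent ℝ ![p x - p z, p y - p z] := by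
    refine ⟨Pi.single x ![1, 0, 0] + Pi.single y ![0, 1, 0], ?_⟩
    rw [LinearIndependent.pair_iff]
    intro s t hst
    have h0 := congr_fun hst 0
    have h1 := congr_fun hst 1
    simp [hxy, hxy.symm, hxz.symm, hyz.symm] at h0 h1
    exact ⟨h0, h1⟩
  obtain ⟨p, hp, hp'⟩ := (lineGeneric_rankAt G (genRank G)).exists_and
    (lineGeneric_noncollinear x y z) (exists_genRank G) hw
  have := rankAt_add_six G p x y z hp'
  omega

lemma numEdges_le_choose {V : Type*} [Fintype V] (G : SimpleGraph V) :
    numEdges G ≤ (Fintype.card V).choose 2 := by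
  classical
  rw [numEdges, ← SimpleGraph.coe_edgeFinset, Set.ncard_coe_finset]
  exact SimpleGraph.card_edgeFinset_le_card_choose_two

lemma numEdges_lt_choose {V : Type*} [Fintype V] (G : SimpleGraph V) {x y : V} (hxy : x ≠ y)
    (h : ¬ G.Adj x y) : numEdges G < (Fintype.card V).choose 2 := by
  classical
  have hlt : G < ⊤ := lt_top_iff_ne_top.2 fun h' => h (by rw [h']; exact hxy)
  rw [numEdges, ← SimpleGraph.coe_edgeFinset, Set.ncard_coe_finset]
  exact (Finset.card_lt_card (SimpleGraph.edgeFinset_ssubset_edgeFinset.2 hlt)).trans_le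
    SimpleGraph.card_edgeFinset_le_card_choose_two

/-! ### Induced subgraphs, gluings and implied non-edges -/

/-- The sparsity bounds for an induced subgraph on a set `S` of at least three vertices, and the
bounds by the number of edges for at most two vertices. In a nucleation-free graph, an induced
subgraph containing a non-edge is never rigid: on at least `5` vertices by assumption, on `3` or
`4` vertices because it has fewer than `3` or `6` edges. -/
lemma genRank_induce_bounds {V : Type*} [Fintype V] [DecidableEq V] (G : SimpleGraph V)
    (hnf : NucleationFree G) {x y : V} (hxy : x ≠ y) (hadj : ¬ G.Adj x y) (S : Finset V) :
    (S.card ≤ 1 → genRank (G.induce (S : Set V)) = 0) ∧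
    (S.card = 2 → genRank (G.induce (S : Set V)) ≤ 1) ∧
    (3 ≤ S.card → genRank (G.induce (S : Set V)) + 6 ≤ 3 * S.card) ∧
    (5 ≤ S.card → genRank (G.induce (S : Set V)) + 7 ≤ 3 * S.card) ∧
    (x ∈ S → y ∈ S → genRank (G.induce (S : Set V)) + 6 ≤ 3 * S.card ∧
      (3 ≤ S.card → genRank (G.induce (S : Set V)) + 7 ≤ 3 * S.card)) := by
  have hcard : Fintype.card (S : Set V) = S.card := by simp
  have hle := (genRank_le_numEdges (G.induce (S : Set V))).trans (numEdges_le_choose _)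
  rw [hcard] at hle
  have h3 : 3 ≤ S.card → genRank (G.induce (S : Set V)) + 6 ≤ 3 * S.card := by
    intro h
    have := genRank_add_six (G.induce (S : Set V)) (by rw [hcard]; exact h)
    rwa [hcard] at this
  have h5 : 5 ≤ S.card → genRank (G.induce (S : Set V)) + 7 ≤ 3 * S.card := by
    intro h
    have := hnf S h
    have := h3 (by omega)
    omega
  refine ⟨?_, ?_, h3, h5, ?_⟩
  · intro h
    rw [Nat.choose_eq_zero_of_lt (by omega)] at hle
    omega
  · intro h
    rw [h] at hle
    exact hle
  · intro hx hy
    have hlt : numEdges (G.induce (S : Set V)) < S.card.choose 2 := by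
      have := numEdges_lt_choose (G.induce (S : Set V)) (x := ⟨x, hx⟩) (y := ⟨y, hy⟩)
        (by simpa using hxy) (by simpa using hadj)
      rwa [hcard] at this
    replace hlt := (genRank_le_numEdges _).trans_lt hlt
    have h2 : 2 ≤ S.card := by
      have := Finset.card_le_card (show {x, y} ⊆ S by
        intro v hv
        rcases Finset.mem_insert.1 hv with rfl | hv
        · exact hx
        · rwa [Finset.mem_singleton.1 hv])
      rwa [Finset.card_pair hxy] at this
    by_cases h : 5 ≤ S.card
    · have := h5 h
      omega
    · have h' : S.card = 2 ∨ S.card = 3 ∨ S.card = 4 := by omega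
      rcases h' with h' | h' | h' <;> rw [h'] at hlt ⊢ <;> simp [Nat.choose] at hlt <;> omega

lemma IsGlue.eq_sup {V₁ V₂ W : Type*} {G₁ : SimpleGraph V₁} {G₂ : SimpleGraph V₂}
    {G : SimpleGraph W} {f : V₁ → W} {g : V₂ → W} (h : IsGlue G₁ G₂ G f g) :
    G = G₁.map (⟨f, h.f_inj⟩ : V₁ ↪ W) ⊔ G₂.map (⟨g, h.g_inj⟩ : V₂ ↪ W) := by
  ext w w'
  rw [h.adj_iff, SimpleGraph.sup_adj, SimpleGraph.map_adj, SimpleGraph.map_adj]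
  apply or_congr <;> exact exists₂_congr fun _ _ => by tauto

lemma IsGlue.genRank_induce_le {V₁ V₂ W : Type*}
    [Fintype V₁] [DecidableEq V₁] [Fintype V₂] [DecidableEq V₂] [Fintype W] [DecidableEq W]
    {G₁ : SimpleGraph V₁} {G₂ : SimpleGraph V₂}
    {G : SimpleGraph W} {f : V₁ → W} {g : V₂ → W} (h : IsGlue G₁ G₂ G f g)
    (S : Finset W) (S₁ : Finset V₁) (S₂ : Finset V₂)
    (h₁ : ∀ x, x ∈ S₁ ↔ f x ∈ S) (h₂ : ∀ y, y ∈ S₂ ↔ g y ∈ S) :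
    genRank (G.induce (S : Set W)) ≤
      genRank (G₁.induce (S₁ : Set V₁)) + genRank (G₂.induce (S₂ : Set V₂)) := by
  rw [← genRank_map (Function.Embedding.subtype _) (G.induce (S : Set W)),
    ← genRank_map ((Function.Embedding.subtype _).trans ⟨f, h.f_inj⟩) (G₁.induce (S₁ : Set V₁)),
    ← genRank_map ((Function.Embedding.subtype _).trans ⟨g, h.g_inj⟩) (G₂.induce (S₂ : Set V₂))]
  refine (genRank_mono ?_).trans (genRank_sup_le _ _)
  intro w w' hw
  obtain ⟨⟨u, hu⟩, ⟨v, hv⟩, huv, rfl, rfl⟩ := (SimpleGraph.map_adj _ _ _ _).1 hw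
  rw [SimpleGraph.sup_adj, SimpleGraph.map_adj, SimpleGraph.map_adj]
  rcases (h.adj_iff u v).1 huv with ⟨x, x', rfl, rfl, hxx⟩ | ⟨x, x', rfl, rfl, hxx⟩
  · exact Or.inl ⟨⟨x, (h₁ x).2 hu⟩, ⟨x', (h₁ x').2 hv⟩, hxx, rfl, rfl⟩
  · exact Or.inr ⟨⟨x, (h₂ x).2 hu⟩, ⟨x', (h₂ x').2 hv⟩, hxx, rfl, rfl⟩

/-- At a framework where `G` attains its generic rank, the row of an implied non-edge lies in the
row space of `G`. -/
lemma IsImpliedNonEdge.row_mem {V : Type*} [Fintype V] [DecidableEq V] {G : SimpleGraph V}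
    {x y : V} (h : IsImpliedNonEdge G x y) (p : V → Fin 3 → ℝ) (hp : genRank G ≤ rankAt G p) :
    rigidityRow p x y ∈ rowSpan G p := by
  have hle : rowSpan G p ≤ rowSpan (addEdge G x y) p := rowSpan_mono le_sup_left p
  have heq := Submodule.eq_of_le_of_finrank_le hle
    ((rankAt_le_genRank (addEdge G x y) p).trans (h.2.2.le.trans hp))
  rw [heq]
  refine Submodule.subset_span ⟨x, y, Or.inr ?_, rfl⟩
  simp [h.1]

/-- **Graph-combination gives nucleation-free dependent graphs**: gluing two
nucleation-free graphs along respective implied non-edges (identifying `a₁` with `a₂`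
and `b₁` with `b₂`, and nothing else) yields a nucleation-free graph that is dependent
in ℝ³. -/
theorem graph_combination_dependent {V₁ V₂ W : Type*}
    [Fintype V₁] [DecidableEq V₁] [Fintype V₂] [DecidableEq V₂]
    [Fintype W] [DecidableEq W]
    (G₁ : SimpleGraph V₁) (G₂ : SimpleGraph V₂) (G : SimpleGraph W)
    (f : V₁ → W) (g : V₂ → W) (hglue : IsGlue G₁ G₂ G f g)
    (a₁ b₁ : V₁) (a₂ b₂ : V₂)
    (hnf₁ : NucleationFree G₁) (himp₁ : IsImpliedNonEdge G₁ a₁ b₁)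
    (hnf₂ : NucleationFree G₂) (himp₂ : IsImpliedNonEdge G₂ a₂ b₂)
    -- the gluing identifies exactly `a₁` with `a₂` and `b₁` with `b₂`
    (hida : f a₁ = g a₂) (hidb : f b₁ = g b₂)
    (honly : ∀ x y, f x = g y → (x = a₁ ∧ y = a₂) ∨ (x = b₁ ∧ y = b₂)) :
    NucleationFree G ∧ genRank G < numEdges G := by
  obtain ⟨hab₁, hadj₁, -⟩ := id himp₁
  obtain ⟨hab₂, hadj₂, -⟩ := id himp₂
  constructor
  · intro S hS
    let F : V₁ ↪ W := ⟨f, hglue.f_inj⟩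
    let F' : V₂ ↪ W := ⟨g, hglue.g_inj⟩
    let S₁ : Finset V₁ := Finset.univ.filter fun x => f x ∈ S
    let S₂ : Finset V₂ := Finset.univ.filter fun y => g y ∈ S
    have m₁ : ∀ x, x ∈ S₁ ↔ f x ∈ S := by simp [S₁]
    have m₂ : ∀ y, y ∈ S₂ ↔ g y ∈ S := by simp [S₂]
    have hle := hglue.genRank_induce_le S S₁ S₂ m₁ m₂
    obtain ⟨b1, b2, b3, b5, bab⟩ := genRank_induce_bounds G₁ hnf₁ hab₁ hadj₁ S₁
    obtain ⟨c1, c2, c3, c5, cab⟩ := genRank_induce_bounds G₂ hnf₂ hab₂ hadj₂ S₂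
    have hunion : S₁.map F ∪ S₂.map F' = S := by
      ext w
      simp only [Finset.mem_union, Finset.mem_map, m₁, m₂]
      constructor
      · rintro (⟨x, hx, rfl⟩ | ⟨x, hx, rfl⟩) <;> exact hx
      · intro hw
        rcases hglue.cover w with ⟨x, rfl⟩ | ⟨x, rfl⟩
        · exact Or.inl ⟨x, hw, rfl⟩
        · exact Or.inr ⟨x, hw, rfl⟩
    have hcard := Finset.card_union_add_card_inter (S₁.map F) (S₂.map F')
    have hk₁ := Finset.card_le_card
      (Finset.inter_subset_left (s₁ := S₁.map F) (s₂ := S₂.map F'))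
    have hk₂ := Finset.card_le_card
      (Finset.inter_subset_right (s₁ := S₁.map F) (s₂ := S₂.map F'))
    have hinter : ∀ w ∈ S₁.map F ∩ S₂.map F', (w = f a₁ ∨ w = f b₁) ∧ w ∈ S := by
      intro w hw
      obtain ⟨hw₁, hw₂⟩ := Finset.mem_inter.1 hw
      obtain ⟨x, hx, rfl⟩ := Finset.mem_map.1 hw₁
      obtain ⟨y, hy, hxy⟩ := Finset.mem_map.1 hw₂
      refine ⟨?_, (m₁ x).1 hx⟩
      rcases honly x y hxy.symm with ⟨rfl, -⟩ | ⟨rfl, -⟩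
      · exact Or.inl rfl
      · exact Or.inr rfl
    rw [hunion, Finset.card_map, Finset.card_map] at hcard
    rw [Finset.card_map] at hk₁ hk₂
    by_cases hboth : f a₁ ∈ S ∧ f b₁ ∈ S
    · have hk : (S₁.map F ∩ S₂.map F').card ≤ 2 := by
        refine (Finset.card_le_card (t := {f a₁, f b₁}) ?_).trans Finset.card_le_two
        intro w hw
        simpa using (hinter w hw).1
      have ba := bab ((m₁ _).2 hboth.1) ((m₁ _).2 hboth.2)
      have ca := cab ((m₂ _).2 (hida ▸ hboth.1)) ((m₂ _).2 (hidb ▸ hboth.2))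
      omega
    · have hk : (S₁.map F ∩ S₂.map F').card ≤ 1 := by
        refine Finset.card_le_one.2 fun u hu v hv => ?_
        obtain ⟨rfl | rfl, hu'⟩ := hinter u hu <;> obtain ⟨rfl | rfl, hv'⟩ := hinter v hv
        · rfl
        · exact absurd ⟨hu', hv'⟩ hboth
        · exact absurd ⟨hv', hu'⟩ hboth
        · rfl
      clear bab cab hinter
      omega
  · have hG := hglue.eq_sup
    set F : V₁ ↪ W := ⟨f, hglue.f_inj⟩
    set F' : V₂ ↪ W := ⟨g, hglue.g_inj⟩
    have hfab : f a₁ ≠ f b₁ := fun h => hab₁ (hglue.f_inj h)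
    -- a framework at which all relevant ranks are generic and the glued vertices are distinct
    obtain ⟨p, ⟨⟨hpG, hp₁⟩, hp₂⟩, hne⟩ :=
      (((lineGeneric_rankAt G (genRank G)).and
        (lineGeneric_rankAt (G₁.map F) (genRank (G₁.map F)))).and
        (lineGeneric_rankAt (G₂.map F') (genRank (G₂.map F')))).exists_and
        (lineGeneric_ne (f a₁) (f b₁))
        (((lineGeneric_rankAt G (genRank G)).and
          (lineGeneric_rankAt (G₁.map F) (genRank (G₁.map F)))).exists_and
          (lineGeneric_rankAt (G₂.map F') (genRank (G₂.map F')))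
          ((lineGeneric_rankAt G (genRank G)).exists_and
            (lineGeneric_rankAt (G₁.map F) (genRank (G₁.map F)))
            (exists_genRank _) (exists_genRank _)) (exists_genRank _))
        ⟨Pi.single (f a₁) 1, by simp [hfab.symm]⟩
    rw [genRank_map, rankAt_map] at hp₁ hp₂
    have hmem₁ : rigidityRow p (f a₁) (f b₁) ∈ rowSpan (G₁.map F) p := by
      rw [rowSpan_map]
      exact ⟨_, himp₁.row_mem _ hp₁, extZero_row F p a₁ b₁⟩
    have hmem₂ : rigidityRow p (f a₁) (f b₁) ∈ rowSpan (G₂.map F') p := by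
      rw [rowSpan_map, hida, hidb]
      exact ⟨_, himp₂.row_mem _ hp₂, extZero_row F' p a₂ b₂⟩
    have hrow : rigidityRow p (f a₁) (f b₁) ≠ 0 := by
      intro h
      exact hne (by simpa [rigidityRow] using congr_fun h (f a₁))
    have hpos : 0 < Module.finrank ℝ
        (rowSpan (G₁.map F) p ⊓ rowSpan (G₂.map F') p : Submodule ℝ (W → Fin 3 → ℝ)) := by
      rw [Module.finrank_pos_iff_exists_ne_zero]
      exact ⟨⟨_, hmem₁, hmem₂⟩, fun h => hrow (congrArg Subtype.val h)⟩
    have hsum := Submodule.finrank_sup_add_finrank_inf_eq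
      (rowSpan (G₁.map F) p) (rowSpan (G₂.map F') p)
    rw [← rowSpan_sup, ← hG, ← rankAt_eq, ← rankAt_eq, ← rankAt_eq] at hsum
    have he₁ := rankAt_le_numEdges (G₁.map F) p
    have he₂ := rankAt_le_numEdges (G₂.map F') p
    -- an edge common to both parts would be the pair of glued vertices
    have hdisj : Disjoint (G₁.map F).edgeSet (G₂.map F').edgeSet := by
      rw [SimpleGraph.disjoint_edgeSet, disjoint_iff_inf_le]
      intro w w' hw
      obtain ⟨h₁, h₂⟩ := hw
      obtain ⟨x, x', hx, rfl, rfl⟩ := (SimpleGraph.map_adj _ _ _ _).1 h₁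
      obtain ⟨y, y', -, hy, hy'⟩ := (SimpleGraph.map_adj _ _ _ _).1 h₂
      have hxx := hx.ne
      rcases honly x y hy.symm with ⟨rfl, -⟩ | ⟨rfl, -⟩ <;>
        rcases honly x' y' hy'.symm with ⟨rfl, -⟩ | ⟨rfl, -⟩
      · exact hxx rfl
      · exact hadj₁ hx
      · exact hadj₁ hx.symm
      · exact hxx rfl
    have hedges : numEdges G = numEdges (G₁.map F) + numEdges (G₂.map F') := by
      rw [hG]
      simp only [numEdges, SimpleGraph.edgeSet_sup]
      exact Set.ncard_union_eq hdisj
    omega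
end

section
/- Let G₁ be a graph with an implied non-edge {a₁,b₁} and G₂ a graph with an implied non-edge {a₂,b₂}, and let G be obtained from the disjoint union of G₁ and G₂ by identifying a₁ with a₂ and b₁ with b₂. If, in addition, G₁ + a₁b₁ and G₂ + a₂b₂ are both rigidity circuits in ℝ³, then G is a rigidity circuit in ℝ³. -/
/-!
Independence of a graph amounts to linear independence of its rigidity rows at a single framework,
and such frameworks are generic: rows depend linearly on `p`, so along a line joining two frameworks
all but finitely many points keep the independence present at either end
(`exists_common_framework`). All edge sets are transported to `W`; write `E₁`, `E₂` for the images of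
the edge sets and `e` for the glued pair `ab`.

*Dependence.* If the rows of `E₁ ∪ E₂` were independent at some `p`, then `p` could be chosen with
`p a ≠ p b`. As `E₁ + e` and `E₂ + e` are dependent, the nonzero row of `e` would lie in the spans of
both `E₁` and `E₂`, which meet only in `0`.

*Minimality.* Let `h ∈ E₁` and choose `p` at which both `E₁ + e - h` and `E₂` are independent. A
vector in the spans of both `E₁ - h` and `E₂` is supported on `{a, b}` and is an equilibrium load
(zero total force and torque), hence it is a multiple of the row of `e`
(`mem_span_edgeRow_of_supported`). Independence of `E₁ + e - h` makes it zero, so the two spans are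
disjoint and `E₁ ∪ E₂ - h` is independent.
-/

open SimpleGraph

variable {V : Type*}

/-- A rigidity circuit in ℝ³: a dependent graph each of whose single-edge deletions is
independent in ℝ³. -/
def IsRigidityCircuit {V : Type*} [DecidableEq V] (G : SimpleGraph V) : Prop :=
  ¬ IsIndependent G ∧ ∀ e ∈ G.edgeSet, IsIndependent (G.deleteEdges {e})

namespace GraphCombination

/-! ### Independence along a line -/

section LinearAlgebra

variable {ι M : Type*} [AddCommGroup M] [Module ℝ M]

/-- Perturbing an independent family in a fixed direction destroys independence for only finitely
many values of the parameter. -/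
lemma finite_not_linearIndependent [Finite ι] {v : ι → M} (w : ι → M)
    (hv : LinearIndependent ℝ v) :
    {t : ℝ | ¬ LinearIndependent ℝ (v + t • w)}.Finite := by
  classical
  have := Fintype.ofFinite ι
  -- A left inverse `L` of the linear combination map of `v` turns the family `v + t • w` into
  -- the rows of `1 + t • A`, whose determinant is a polynomial in `t` with value `1` at `0`.
  obtain ⟨L, hL⟩ := (Fintype.linearCombination ℝ v).exists_leftInverse_of_injective
    (LinearMap.ker_eq_bot.2 (linearIndependent_iff_injective_fintypeLinearCombination.1 hv))
  have hLv : ∀ i, L (v i) = Pi.single i 1 := fun i => by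
    have := LinearMap.congr_fun hL (Pi.single i (1 : ℝ))
    simpa [Fintype.linearCombination_apply_single] using this
  let A : Matrix ι ι ℝ := Matrix.of fun i => L (w i)
  let P : Polynomial ℝ :=
    (1 + (Polynomial.X : Polynomial ℝ) • A.map Polynomial.C : Matrix ι ι (Polynomial ℝ)).det
  have hP : ∀ t, P.eval t = (1 + t • A).det := fun t => by
    rw [← Polynomial.coe_evalRingHom, RingHom.map_det]
    congr 1
    ext i j
    by_cases hij : i = j <;> simp [hij, mul_comm t]
  have hP0 : P ≠ 0 := fun h => by
    have := hP 0
    simp [h] at this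
  refine (P.roots.toFinset.finite_toSet).subset fun t ht => ?_
  by_contra hroot
  apply ht
  have hdet : (1 + t • A).det ≠ 0 := by
    rw [← hP]
    intro h0
    apply hroot
    simp [hP0, Polynomial.IsRoot, h0]
  have hrows := Matrix.linearIndependent_rows_iff_isUnit.2
    ((Matrix.isUnit_iff_isUnit_det _).2 hdet.isUnit)
  refine LinearIndependent.of_comp L ?_
  have heq : L ∘ (v + t • w) = (1 + t • A).row := by
    funext i
    ext j
    rcases eq_or_ne i j with rfl | hij
    · simp [hLv, A]
    · simp [hLv, A, Matrix.one_apply_ne hij, Pi.single_eq_of_ne hij.symm]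
  rw [heq]
  exact hrows

end LinearAlgebra

/-! ### Rigidity rows and equilibrium loads -/

section Rows

variable {V : Type*} [DecidableEq V]

lemma rigidityRow_comm (p : V → Fin 3 → ℝ) (i j : V) : rigidityRow p i j = rigidityRow p j i := by
  funext k
  unfold rigidityRow
  by_cases h : i = j
  · subst h; rfl
  · by_cases hi : k = i <;> by_cases hj : k = j <;> grind

/-- The rigidity row of an unordered pair; it is zero on the diagonal. -/
def edgeRow (p : V → Fin 3 → ℝ) : Sym2 V → V → Fin 3 → ℝ :=
  Sym2.lift ⟨rigidityRow p, rigidityRow_comm p⟩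

@[simp] lemma edgeRow_mk (p : V → Fin 3 → ℝ) (i j : V) :
    edgeRow p s(i, j) = rigidityRow p i j := rfl

lemma edgeRow_add_smul (p q : V → Fin 3 → ℝ) (t : ℝ) (e : Sym2 V) :
    edgeRow (p + t • q) e = edgeRow p e + t • edgeRow q e := by
  induction e with | _ i j
  funext k l
  simp only [edgeRow_mk, rigidityRow, Pi.add_apply, Pi.smul_apply]
  split_ifs <;> simp <;> ring

/-- A set of pairs is independent if its rigidity rows are linearly independent at some
framework. -/
def Ind (S : Set (Sym2 V)) : Prop :=
  ∃ p : V → Fin 3 → ℝ, LinearIndepOn ℝ (edgeRow p) S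

lemma Ind.mono {S T : Set (Sym2 V)} (hT : Ind T) (h : S ⊆ T) : Ind S :=
  hT.imp fun _ hp => hp.mono h

lemma ind_singleton {a b : V} (hab : a ≠ b) : Ind ({s(a, b)} : Set (Sym2 V)) := by
  refine ⟨fun v _ => if v = a then 1 else 0, linearIndepOn_singleton_iff ℝ |>.2 fun h => ?_⟩
  have := congrFun (congrFun h a) 0
  simp [rigidityRow, hab.symm] at this

lemma finite_bad {S : Set (Sym2 V)} (hS : S.Finite) {p : V → Fin 3 → ℝ} (q : V → Fin 3 → ℝ)
    (hp : LinearIndepOn ℝ (edgeRow p) S) :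
    {t : ℝ | ¬ LinearIndepOn ℝ (edgeRow (p + t • q)) S}.Finite := by
  have := hS.to_subtype
  refine (finite_not_linearIndependent (fun e : S => edgeRow q e) hp).subset fun t ht h => ht ?_
  have heq : (fun e : S => edgeRow (p + t • q) e)
      = (fun e : S => edgeRow p e) + t • fun e : S => edgeRow q e :=
    funext fun e => edgeRow_add_smul p q t e
  rw [LinearIndepOn, heq]
  exact h

/-- Two independent sets of pairs are independent at a common framework, found on the line
through frameworks for the two sets. -/
lemma exists_common_framework [Finite V] {S T : Set (Sym2 V)} (hS : Ind S) (hT : Ind T) :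
    ∃ p : V → Fin 3 → ℝ, LinearIndepOn ℝ (edgeRow p) S ∧ LinearIndepOn ℝ (edgeRow p) T := by
  obtain ⟨p, hp⟩ := hS
  obtain ⟨q, hq⟩ := hT
  have h1 := finite_bad S.toFinite (q - p) hp
  have h2 := (finite_bad T.toFinite (p - q) hq).image fun t => 1 - t
  obtain ⟨t, ht⟩ := (h1.union h2).infinite_compl.nonempty
  simp only [Set.mem_compl_iff, Set.mem_union, not_or] at ht
  refine ⟨p + t • (q - p), not_not.1 ht.1, ?_⟩
  by_contra hcon
  refine ht.2 ⟨1 - t, ?_, by ring⟩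
  have : q + (1 - t) • (p - q) = p + t • (q - p) := by module
  simpa only [Set.mem_ofPred_eq, this] using hcon

lemma edgeRow_apply_of_notMem (p : V → Fin 3 → ℝ) {e : Sym2 V} {k : V} (hk : k ∉ e) :
    edgeRow p e k = 0 := by
  induction e with | _ i j
  rw [Sym2.mem_iff, not_or] at hk
  simp [rigidityRow, hk.1, hk.2]

/-- Combinations of rows of pairs inside `A` vanish off `A`. -/
lemma span_edgeRow_supported (p : V → Fin 3 → ℝ) {S : Set (Sym2 V)} {A : Set V}
    (hS : ∀ e ∈ S, ∀ v ∈ e, v ∈ A) {u : V → Fin 3 → ℝ}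
    (hu : u ∈ Submodule.span ℝ (edgeRow p '' S)) {k : V} (hk : k ∉ A) : u k = 0 := by
  induction hu using Submodule.span_induction with
  | mem x hx =>
    obtain ⟨e, he, rfl⟩ := hx
    exact edgeRow_apply_of_notMem p fun h => hk (hS e he k h)
  | zero => rfl
  | add x y _ _ hx hy => simp [hx, hy]
  | smul c x _ hx => simp [hx]

/-- Every combination of rigidity rows has zero total force. -/
lemma span_edgeRow_force [Fintype V] (p : V → Fin 3 → ℝ) {S : Set (Sym2 V)}
    {u : V → Fin 3 → ℝ} (hu : u ∈ Submodule.span ℝ (edgeRow p '' S)) : ∑ k, u k = 0 := by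
  induction hu using Submodule.span_induction with
  | mem x hx =>
    obtain ⟨e, -, rfl⟩ := hx
    induction e with | _ i j
    by_cases h : i = j
    · subst h; simp [rigidityRow]
    · rw [Fintype.sum_eq_add i j h (fun k hk => by simp [rigidityRow, hk.1, hk.2])]
      simp [rigidityRow, Ne.symm h]
  | zero => simp
  | add x y _ _ hx hy => simp [Finset.sum_add_distrib, hx, hy]
  | smul c x _ hx => simp [← Finset.smul_sum, hx]

/-- Every combination of rigidity rows has zero total torque. -/
lemma span_edgeRow_torque [Fintype V] (p : V → Fin 3 → ℝ) {S : Set (Sym2 V)}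
    {u : V → Fin 3 → ℝ} (hu : u ∈ Submodule.span ℝ (edgeRow p '' S)) (l m : Fin 3) :
    ∑ k, (p k l * u k m - p k m * u k l) = 0 := by
  induction hu using Submodule.span_induction with
  | mem x hx =>
    obtain ⟨e, -, rfl⟩ := hx
    induction e with | _ i j
    by_cases h : i = j
    · subst h; simp [rigidityRow]
    · rw [Fintype.sum_eq_add i j h (fun k hk => by simp [rigidityRow, hk.1, hk.2])]
      simp [rigidityRow, Ne.symm h]
      ring
  | zero => simp
  | add x y _ _ hx hy =>
    rw [← add_zero (0 : ℝ)]
    nth_rw 1 [← hx]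
    rw [← hy, ← Finset.sum_add_distrib]
    refine Finset.sum_congr rfl fun k _ => ?_
    simp only [Pi.add_apply]
    ring
  | smul c x _ hx =>
    rw [← mul_zero c, ← hx, Finset.mul_sum]
    refine Finset.sum_congr rfl fun k _ => ?_
    simp only [Pi.smul_apply, smul_eq_mul]
    ring

/-- An equilibrium load supported on two points in distinct positions is a multiple of the row
of the bar joining them. -/
lemma mem_span_edgeRow_of_supported [Fintype V] (p : V → Fin 3 → ℝ) {S : Set (Sym2 V)}
    {u : V → Fin 3 → ℝ} (hu : u ∈ Submodule.span ℝ (edgeRow p '' S)) {a b : V}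
    (hab : edgeRow p s(a, b) ≠ 0) (hsupp : ∀ k, k ≠ a ∧ k ≠ b → u k = 0) :
    u ∈ Submodule.span ℝ {edgeRow p s(a, b)} := by
  have hne : a ≠ b := by
    rintro rfl
    exact hab (by funext k; simp [rigidityRow])
  have hd : ∃ l, p a l - p b l ≠ 0 := by
    by_contra! h
    have h' : p a = p b := funext fun l => sub_eq_zero.1 (h l)
    exact hab (by funext k; simp [rigidityRow, h'])
  obtain ⟨l, hl⟩ := hd
  have hF := span_edgeRow_force p hu
  rw [Fintype.sum_eq_add a b hne hsupp] at hF
  have hF' : ∀ m, u b m = - u a m := fun m => by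
    have := congrFun hF m
    simp only [Pi.add_apply, Pi.zero_apply] at this
    linarith
  have hT : ∀ m, (p a l - p b l) * u a m = (p a m - p b m) * u a l := fun m => by
    have := span_edgeRow_torque p hu l m
    rw [Fintype.sum_eq_add a b hne (fun k hk => by simp [hsupp k hk])] at this
    rw [hF', hF'] at this
    linarith
  rw [Submodule.mem_span_singleton]
  refine ⟨u a l / (p a l - p b l), ?_⟩
  funext k m
  simp only [edgeRow_mk, rigidityRow, Pi.smul_apply, smul_eq_mul]
  split_ifs with h1 h2
  · subst h1
    rw [Pi.sub_apply]
    field_simp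
    linarith [hT m]
  · subst h2
    rw [Pi.sub_apply, hF']
    field_simp
    linarith [hT m]
  · simp [hsupp k ⟨h1, h2⟩]

end Rows

/-! ### Independent graphs and relabelling -/

section Graphs

variable {V : Type*} [Fintype V] [DecidableEq V]

lemma rankAt_eq (G : SimpleGraph V) (p : V → Fin 3 → ℝ) :
    rankAt G p = Module.finrank ℝ (Submodule.span ℝ (edgeRow p '' G.edgeSet)) := by
  suffices hset : {w | ∃ i j, G.Adj i j ∧ w = rigidityRow p i j} = edgeRow p '' G.edgeSet by
    rw [rankAt, hset]
  ext w
  constructor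
  · rintro ⟨i, j, h, rfl⟩
    exact ⟨s(i, j), h, rfl⟩
  · rintro ⟨e, he, rfl⟩
    induction e with | _ i j
    exact ⟨i, j, he, rfl⟩

lemma rankAt_le (G : SimpleGraph V) (p : V → Fin 3 → ℝ) : rankAt G p ≤ numEdges G := by
  rw [rankAt_eq, numEdges]
  have hfin := G.edgeSet.toFinite
  have := (hfin.image (edgeRow p)).fintype
  refine (finrank_span_le_card (R := ℝ) (edgeRow p '' G.edgeSet)).trans ?_
  rw [← Set.ncard_eq_toFinset_card']
  exact Set.ncard_image_le hfin

lemma rankAt_eq_iff (G : SimpleGraph V) (p : V → Fin 3 → ℝ) :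
    rankAt G p = numEdges G ↔ LinearIndepOn ℝ (edgeRow p) G.edgeSet := by
  have := G.edgeSet.toFinite.fintype
  rw [LinearIndepOn, linearIndependent_iff_card_eq_finrank_span, rankAt_eq, numEdges, Set.finrank,
    eq_comm, ← Set.image_eq_range, Set.ncard_eq_toFinset_card', Set.toFinset_card]

lemma isIndependent_iff (G : SimpleGraph V) : IsIndependent G ↔ Ind G.edgeSet := by
  have hbdd : BddAbove {n : ℕ | ∃ p : V → Fin 3 → ℝ, n = rankAt G p} :=
    ⟨numEdges G, by rintro _ ⟨p, rfl⟩; exact rankAt_le G p⟩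
  have hne : {n : ℕ | ∃ p : V → Fin 3 → ℝ, n = rankAt G p}.Nonempty := ⟨_, 0, rfl⟩
  constructor
  · intro h
    obtain ⟨p, hp⟩ := Nat.sSup_mem hne hbdd
    exact ⟨p, (rankAt_eq_iff G p).1 (hp.symm.trans h)⟩
  · rintro ⟨p, hp⟩
    refine le_antisymm (csSup_le hne (by rintro _ ⟨p, rfl⟩; exact rankAt_le G p)) ?_
    exact le_csSup hbdd ⟨p, ((rankAt_eq_iff G p).2 hp).symm⟩

lemma isRigidityCircuit_iff (G : SimpleGraph V) :
    IsRigidityCircuit G ↔ ¬ Ind G.edgeSet ∧ ∀ e ∈ G.edgeSet, Ind (G.edgeSet \ {e}) := by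
  simp [IsRigidityCircuit, isIndependent_iff, SimpleGraph.edgeSet_deleteEdges]

lemma edgeSet_addEdge (G : SimpleGraph V) {x y : V} (h : x ≠ y) :
    (addEdge G x y).edgeSet = insert s(x, y) G.edgeSet := by
  rw [addEdge, SimpleGraph.edgeSet_sup, SimpleGraph.edgeSet_fromEdgeSet, Set.insert_eq,
    Set.union_comm]
  congr 1
  ext e
  simp only [Set.mem_sdiff, Set.mem_singleton_iff, and_iff_left_iff_imp]
  rintro rfl
  simpa using h

variable {W : Type*} [DecidableEq W]

lemma edgeRow_map {f : V → W} (hf : Function.Injective f) (p : W → Fin 3 → ℝ) (e : Sym2 V) :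
    LinearMap.funLeft ℝ (Fin 3 → ℝ) f (edgeRow p (e.map f)) = edgeRow (p ∘ f) e := by
  induction e with | _ i j
  funext k
  simp [rigidityRow, LinearMap.funLeft_apply, hf.eq_iff]

/-- Independence is invariant under injective relabelling of the vertices. Restriction along `f`
is injective on vectors supported on the range of `f`, in particular on the span of the rows. -/
lemma ind_image_iff {f : V → W} (hf : Function.Injective f) (S : Set (Sym2 V)) :
    Ind (Sym2.map f '' S) ↔ Ind S := by
  have key : ∀ p : W → Fin 3 → ℝ,
      LinearIndepOn ℝ (edgeRow p) (Sym2.map f '' S) ↔ LinearIndepOn ℝ (edgeRow (p ∘ f)) S := by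
    intro p
    have hcomp : LinearIndepOn ℝ (edgeRow p) (Sym2.map f '' S) ↔
        LinearIndepOn ℝ (edgeRow p ∘ Sym2.map f) S :=
      (linearIndependent_equiv' (Equiv.Set.image _ S (Sym2.map.injective hf)) rfl).symm
    have hrow : edgeRow (p ∘ f) = LinearMap.funLeft ℝ (Fin 3 → ℝ) f ∘ (edgeRow p ∘ Sym2.map f) :=
      funext fun e => (edgeRow_map hf p e).symm
    rw [hcomp, hrow, LinearMap.linearIndepOn_iff_of_injOn]
    rw [Set.image_comp]
    intro u hu u' hu' h
    have hsupp : ∀ e ∈ Sym2.map f '' S, ∀ v ∈ e, v ∈ Set.range f := by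
      rintro _ ⟨e, -, rfl⟩ v hv
      obtain ⟨x, -, rfl⟩ := Sym2.mem_map.1 hv
      exact ⟨x, rfl⟩
    funext k
    by_cases hk : k ∈ Set.range f
    · obtain ⟨x, rfl⟩ := hk
      exact congrFun h x
    · rw [span_edgeRow_supported p hsupp hu hk, span_edgeRow_supported p hsupp hu' hk]
  constructor
  · rintro ⟨p, hp⟩
    exact ⟨p ∘ f, (key p).1 hp⟩
  · rintro ⟨q, hq⟩
    refine ⟨Function.extend f q 0, (key _).2 ?_⟩
    have hext : Function.extend f q 0 ∘ f = q := funext fun x => hf.extend_apply q 0 x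
    rwa [hext]

end Graphs

/-! ### Gluing edge sets along a pair -/

section Gluing

variable {W : Type*} [Fintype W] [DecidableEq W]

/-- If adding a common pair makes each of two disjoint edge sets dependent, their union is
dependent. -/
lemma not_ind_union {E₁ E₂ : Set (Sym2 W)} {a b : W} (hab : a ≠ b) (hdisj : Disjoint E₁ E₂)
    (h₁ : ¬ Ind (insert s(a, b) E₁)) (h₂ : ¬ Ind (insert s(a, b) E₂)) : ¬ Ind (E₁ ∪ E₂) := by
  intro hind
  obtain ⟨p, hp, hpe⟩ := exists_common_framework hind (ind_singleton hab)
  have hspan : ∀ E ⊆ E₁ ∪ E₂, ¬ Ind (insert s(a, b) E) →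
      edgeRow p s(a, b) ∈ Submodule.span ℝ (edgeRow p '' E) := fun E hE hn => by
    by_contra hcon
    exact hn ⟨p, (hp.mono hE).insert hcon⟩
  have hd := ((linearIndepOn_union_iff hdisj).1 hp).2.2
  exact (linearIndepOn_singleton_iff ℝ).1 hpe (Submodule.disjoint_def.1 hd _
    (hspan E₁ Set.subset_union_left h₁) (hspan E₂ Set.subset_union_right h₂))

/-- Removing `h ∈ E₁` leaves the union independent: a vector common to the spans of `E₁ \ {h}` and
`E₂` is a multiple of the row of `ab`, which is not in the span of `E₁ \ {h}`. -/
lemma ind_union_diff {E₁ E₂ : Set (Sym2 W)} {A B : Set W} {a b : W}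
    (hA : ∀ e ∈ E₁, ∀ v ∈ e, v ∈ A) (hB : ∀ e ∈ E₂, ∀ v ∈ e, v ∈ B)
    (hAB : ∀ v ∈ A, v ∈ B → v = a ∨ v = b) (he : s(a, b) ∉ E₁) {h : Sym2 W} (hh : h ∈ E₁)
    (h₁ : Ind (insert s(a, b) E₁ \ {h})) (h₂ : Ind E₂) : Ind ((E₁ ∪ E₂) \ {h}) := by
  suffices H : Ind (E₁ \ {h} ∪ E₂) from
    H.mono (by rw [Set.union_sdiff_distrib]; exact Set.union_subset_union_right _ Set.sdiff_subset)
  obtain ⟨p, hp₁, hp₂⟩ := exists_common_framework h₁ h₂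
  have hne : s(a, b) ≠ h := fun hc => he (hc ▸ hh)
  rw [Set.insert_sdiff_of_notMem _ (by simpa using hne),
    linearIndepOn_insert (fun hc => he hc.1)] at hp₁
  obtain ⟨hp₁, hnot⟩ := hp₁
  refine ⟨p, hp₁.union hp₂ (Submodule.disjoint_def.2 fun u hu₁ hu₂ => ?_)⟩
  have hrow : edgeRow p s(a, b) ≠ 0 := fun h0 => hnot (h0 ▸ Submodule.zero_mem _)
  have hmem : u ∈ Submodule.span ℝ {edgeRow p s(a, b)} := by
    refine mem_span_edgeRow_of_supported p hu₁ hrow fun k hk => ?_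
    by_cases hkA : k ∈ A
    · refine span_edgeRow_supported p hB hu₂ fun hkB => ?_
      rcases hAB k hkA hkB with h | h
      exacts [hk.1 h, hk.2 h]
    · exact span_edgeRow_supported p (fun e he => hA e he.1) hu₁ hkA
  obtain ⟨c, rfl⟩ := Submodule.mem_span_singleton.1 hmem
  by_contra hc
  exact hnot ((Submodule.smul_mem_iff _ (fun h0 => hc (by simp [h0]))).1 hu₁)

end Gluing

/-- What the circuit hypothesis on `G + ab` says about the image of `G` under a relabelling `f`. -/
lemma circuit_image {V W : Type*} [Fintype V] [DecidableEq V] [DecidableEq W] {G : SimpleGraph V}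
    {f : V → W} (hf : Function.Injective f) {a b : V} (hab : a ≠ b) (hG : ¬ G.Adj a b)
    (hc : IsRigidityCircuit (addEdge G a b)) :
    s(f a, f b) ∉ Sym2.map f '' G.edgeSet ∧
    ¬ Ind (insert s(f a, f b) (Sym2.map f '' G.edgeSet)) ∧
    Ind (Sym2.map f '' G.edgeSet) ∧
    ∀ h ∈ Sym2.map f '' G.edgeSet, Ind (insert s(f a, f b) (Sym2.map f '' G.edgeSet) \ {h}) := by
  have hinj := Sym2.map.injective hf
  rw [isRigidityCircuit_iff, edgeSet_addEdge G hab] at hc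
  have himg : insert s(f a, f b) (Sym2.map f '' G.edgeSet)
      = Sym2.map f '' (insert s(a, b) G.edgeSet) := by
    rw [Set.image_insert_eq, Sym2.map_mk]
  have hnot : s(a, b) ∉ G.edgeSet := hG
  refine ⟨?_, ?_, ?_, ?_⟩
  · rintro ⟨e, he, hee⟩
    rw [← Sym2.map_mk] at hee
    exact hnot (hinj hee ▸ he)
  · rw [himg, ind_image_iff hf]
    exact hc.1
  · rw [ind_image_iff hf]
    have := hc.2 _ (Set.mem_insert _ _)
    rwa [Set.insert_sdiff_self_of_notMem hnot] at this
  · rintro _ ⟨e, he, rfl⟩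
    rw [himg, ← Set.image_singleton, ← Set.image_sdiff hinj, ind_image_iff hf]
    exact hc.2 e (Set.mem_insert_of_mem _ he)

end GraphCombination

open GraphCombination in
/-- **Graph-combination of circuits gives circuits**: if `G` is obtained from `G₁` and
`G₂` by identifying the implied non-edge `{a₁,b₁}` of `G₁` with the implied non-edge
`{a₂,b₂}` of `G₂` (and nothing else), and `G₁ + a₁b₁` and `G₂ + a₂b₂` are rigidity
circuits in ℝ³, then `G` is a rigidity circuit in ℝ³. -/
theorem graph_combination_circuit {V₁ V₂ W : Type*}
    [Fintype V₁] [DecidableEq V₁] [Fintype V₂] [DecidableEq V₂]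
    [Fintype W] [DecidableEq W]
    (G₁ : SimpleGraph V₁) (G₂ : SimpleGraph V₂) (G : SimpleGraph W)
    (f : V₁ → W) (g : V₂ → W) (hglue : IsGlue G₁ G₂ G f g)
    (a₁ b₁ : V₁) (a₂ b₂ : V₂)
    (himp₁ : IsImpliedNonEdge G₁ a₁ b₁) (himp₂ : IsImpliedNonEdge G₂ a₂ b₂)
    (hida : f a₁ = g a₂) (hidb : f b₁ = g b₂)
    (honly : ∀ x y, f x = g y → (x = a₁ ∧ y = a₂) ∨ (x = b₁ ∧ y = b₂))
    (hcirc₁ : IsRigidityCircuit (addEdge G₁ a₁ b₁))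
    (hcirc₂ : IsRigidityCircuit (addEdge G₂ a₂ b₂)) :
    IsRigidityCircuit G := by
  obtain ⟨hab₁, hadj₁, -⟩ := himp₁
  obtain ⟨hab₂, hadj₂, -⟩ := himp₂
  obtain ⟨hn₁, hd₁, hi₁, hm₁⟩ := circuit_image hglue.f_inj hab₁ hadj₁ hcirc₁
  obtain ⟨hn₂, hd₂, hi₂, hm₂⟩ := circuit_image hglue.g_inj hab₂ hadj₂ hcirc₂
  rw [← hida, ← hidb] at hn₂ hd₂ hm₂
  have hab : f a₁ ≠ f b₁ := fun h => hab₁ (hglue.f_inj h)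
  have hE : G.edgeSet = Sym2.map f '' G₁.edgeSet ∪ Sym2.map g '' G₂.edgeSet := by
    ext e
    induction e with | _ w w'
    rw [SimpleGraph.mem_edgeSet, hglue.adj_iff]
    constructor
    · rintro (⟨x, x', rfl, rfl, h⟩ | ⟨x, x', rfl, rfl, h⟩)
      · exact Or.inl ⟨s(x, x'), h, rfl⟩
      · exact Or.inr ⟨s(x, x'), h, rfl⟩
    · rintro (⟨e, he, hee⟩ | ⟨e, he, hee⟩)
      all_goals
        induction e with | _ x x'
        rw [Sym2.map_mk, Sym2.eq_iff] at hee
      · rcases hee with ⟨h, h'⟩ | ⟨h, h'⟩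
        exacts [Or.inl ⟨x, x', h, h', he⟩, Or.inl ⟨x', x, h', h, he.symm⟩]
      · rcases hee with ⟨h, h'⟩ | ⟨h, h'⟩
        exacts [Or.inr ⟨x, x', h, h', he⟩, Or.inr ⟨x', x, h', h, he.symm⟩]
  have hA : ∀ e ∈ Sym2.map f '' G₁.edgeSet, ∀ v ∈ e, v ∈ Set.range f := by
    rintro _ ⟨e, -, rfl⟩ v hv
    obtain ⟨x, -, rfl⟩ := Sym2.mem_map.1 hv
    exact ⟨x, rfl⟩
  have hB : ∀ e ∈ Sym2.map g '' G₂.edgeSet, ∀ v ∈ e, v ∈ Set.range g := by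
    rintro _ ⟨e, -, rfl⟩ v hv
    obtain ⟨x, -, rfl⟩ := Sym2.mem_map.1 hv
    exact ⟨x, rfl⟩
  have hAB : ∀ v ∈ Set.range f, v ∈ Set.range g → v = f a₁ ∨ v = f b₁ := by
    rintro _ ⟨x, rfl⟩ ⟨y, hy⟩
    rcases honly x y hy.symm with ⟨rfl, -⟩ | ⟨rfl, -⟩
    exacts [Or.inl rfl, Or.inr rfl]
  have hdisj : Disjoint (Sym2.map f '' G₁.edgeSet) (Sym2.map g '' G₂.edgeSet) := by
    rw [Set.disjoint_left]
    intro e he₁ he₂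
    have hv : ∀ v ∈ e, v = f a₁ ∨ v = f b₁ := fun v h => hAB v (hA e he₁ v h) (hB e he₂ v h)
    have hdiag : ¬ e.IsDiag := G.not_isDiag_of_mem_edgeSet (hE ▸ Or.inl he₁)
    -- A non-diagonal pair inside `{f a₁, f b₁}` is the glued pair, which is not an edge.
    have : e = s(f a₁, f b₁) := by
      induction e with | _ w w'
      rw [Sym2.mk_isDiag_iff] at hdiag
      have h1 := hv w (Sym2.mem_mk_left _ _)
      have h2 := hv w' (Sym2.mem_mk_right _ _)
      rw [Sym2.eq_iff]
      grind
    exact hn₁ (this ▸ he₁)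
  rw [isRigidityCircuit_iff, hE]
  refine ⟨not_ind_union hab hdisj hd₁ hd₂, ?_⟩
  rintro h (hh | hh)
  · exact ind_union_diff hA hB hAB hn₁ hh (hm₁ h hh) hi₂
  · rw [Set.union_comm]
    exact ind_union_diff hB hA (fun v h h' => hAB v h' h) hn₂ hh (hm₂ h hh) hi₁
end

section
/- Let D be the double-ring of 14 roofs: the graph obtained from two disjoint copies of the ring of seven roofs R₇ by identifying the two vertices of one hinge non-edge of the first copy with the two vertices of one hinge non-edge of the second copy. Then D is nucleation-free and dependent in ℝ³ (rk₃(D) < |E(D)|). -/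
/-!
**Dependence.** For five points of `ℝ³` with an affine dependence `l`, the products `l s * l t` form
a self-stress of the complete graph on them. Applied to a roof, this puts a nontrivial combination
of its eight edge rows into the span of its two hinge rows (`roof_stress`). If the edge rows of the
ring are independent, the seven vectors so obtained are independent as well, hence they span the
span of the seven hinge rows, and every hinge row lies in the row space of the ring
(`hinge_mem_span`). In the double ring, the row of the common hinge therefore lies in the row spaces
of both rings. If the 112 edge rows of `D` were independent at some placement, hence at an injective
placement (`exists_injective_linearIndependent`), these two row spaces would meet in `0` only, a
contradiction.

**Nucleation-freeness.** The rank of an induced subgraph is at most its number of edges, so it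
suffices that every vertex set `T` with `|T| ≥ 5` spans at most `3 |T| - 7` edges of `D`. For a
vertex set `S` of one ring, `6 |S| - 2 |E(S)|` is a sum of contributions of the roofs. If `S` meets
every hinge, each contribution is at least `2`, for a total of at least `14`. Otherwise the ring can
be cut open at a hinge that avoids `S`, and a potential function bounds the sum along the resulting
chain (`ring_sparse`). The two rings overlap in at most two vertices, which span no edge, and the
bounds for the two parts of `T` add up.
-/


open SimpleGraph

variable {V : Type*}

/-- The ring of `k` roofs: vertex `(i,0)` is the hinge vertex `aᵢ`, `(i,1)` is `bᵢ`,
and `(i,2)` is the apex `cᵢ` of the roof `Bᵢ` spanning the hinges `{aᵢ₋₁,bᵢ₋₁}` and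
`{aᵢ,bᵢ}`. -/
def ringOfRoofs (k : ℕ) : SimpleGraph (ZMod k × Fin 3) :=
  SimpleGraph.fromRel (fun x y =>
    (y.1 = x.1 + 1 ∧ x.2 ≠ 2 ∧ y.2 ≠ 2) ∨
    (x.2 = 2 ∧ y.2 ≠ 2 ∧ (y.1 = x.1 ∨ y.1 + 1 = x.1)))


/-! ### The edges of the ring, and ranks -/

/-- First endpoint of the `e`-th edge of the `i`-th roof of `R₇`. The edges `e < 4` join the two
hinges `{(i-1,0), (i-1,1)}` and `{(i,0), (i,1)}`; the edges `e ≥ 4` join the apex `(i,2)` to them. -/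
def edgeFst (x : ZMod 7 × Fin 8) : ZMod 7 × Fin 3 :=
  ![(x.1 - 1, 0), (x.1 - 1, 0), (x.1 - 1, 1), (x.1 - 1, 1),
    (x.1, 2), (x.1, 2), (x.1, 2), (x.1, 2)] x.2

/-- Second endpoint of the `e`-th edge of the `i`-th roof of `R₇`; see `edgeFst`. -/
def edgeSnd (x : ZMod 7 × Fin 8) : ZMod 7 × Fin 3 :=
  ![(x.1, 0), (x.1, 1), (x.1, 0), (x.1, 1),
    (x.1 - 1, 0), (x.1 - 1, 1), (x.1, 0), (x.1, 1)] x.2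

theorem ring_adj_iff (x y : ZMod 7 × Fin 3) : (ringOfRoofs 7).Adj x y ↔
    ∃ e, (edgeFst e = x ∧ edgeSnd e = y) ∨ (edgeFst e = y ∧ edgeSnd e = x) := by
  rw [ringOfRoofs, SimpleGraph.fromRel_adj]
  revert x y
  decide +kernel

theorem edge_injective : ∀ e e' : ZMod 7 × Fin 8,
    (edgeFst e = edgeFst e' ∧ edgeSnd e = edgeSnd e') ∨
    (edgeFst e = edgeSnd e' ∧ edgeSnd e = edgeFst e') → e = e' := by
  decide +kernel

theorem edge_ne_hinge : ∀ (e : ZMod 7 × Fin 8) (j : ZMod 7),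
    ¬ ((edgeFst e = (j, 0) ∨ edgeFst e = (j, 1)) ∧
      (edgeSnd e = (j, 0) ∨ edgeSnd e = (j, 1))) := by
  decide +kernel

theorem rigidityRow_apply [DecidableEq V] (p : V → Fin 3 → ℝ) (i j k : V) (c : Fin 3) :
    rigidityRow p i j k c =
      ((if k = i then 1 else 0) - (if k = j then 1 else 0)) * (p i c - p j c) := by
  unfold rigidityRow
  by_cases h1 : k = i <;> by_cases h2 : k = j
  · subst h1; subst h2; simp
  · subst h1; simp [h2]
  · subst h2; simp [h1]
  · simp [h1, h2]

theorem rigidityRow_comm [DecidableEq V] (p : V → Fin 3 → ℝ) (i j : V) :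
    rigidityRow p i j = rigidityRow p j i := by
  ext k c
  simp only [rigidityRow_apply]
  ring

theorem rankAt_le_finrank_span [Finite V] [DecidableEq V] (G : SimpleGraph V)
    (p : V → Fin 3 → ℝ) {ι : Type*} (u v : ι → V)
    (h : ∀ x y, G.Adj x y → ∃ e, (u e = x ∧ v e = y) ∨ (u e = y ∧ v e = x)) :
    rankAt G p ≤
      Module.finrank ℝ (Submodule.span ℝ (Set.range fun e => rigidityRow p (u e) (v e))) := by
  apply Submodule.finrank_mono
  apply Submodule.span_mono
  rintro w ⟨x, y, hxy, rfl⟩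
  obtain ⟨e, ⟨rfl, rfl⟩ | ⟨rfl, rfl⟩⟩ := h x y hxy
  · exact ⟨e, rfl⟩
  · exact ⟨e, rigidityRow_comm _ _ _⟩

theorem genRank_le [DecidableEq V] (G : SimpleGraph V) (n : ℕ) (h : ∀ p, rankAt G p ≤ n) :
    genRank G ≤ n :=
  csSup_le ⟨_, 0, rfl⟩ (by rintro _ ⟨p, rfl⟩; exact h p)

/-! ### Sparsity of the ring -/

/-- Number of edges of `R₇` spanned by the vertex set `S`. -/
def spannedEdges (S : Finset (ZMod 7 × Fin 3)) : ℕ :=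
  (Finset.univ.filter fun e => edgeFst e ∈ S ∧ edgeSnd e ∈ S).card

/-- The contribution of one roof to `6 |S| - 2 |E(S)|`, hinge vertices being shared equally between
their two roofs: `a, b` and `a', b'` tell which vertices of the two hinges lie in `S`, and `c`
whether the apex does. -/
def roofDefect (a b a' b' c : Bool) : ℤ :=
  3 * (a.toNat + b.toNat + a'.toNat + b'.toNat) + 6 * c.toNat
    - 2 * ((a.toNat + b.toNat) * (a'.toNat + b'.toNat)
      + c.toNat * (a.toNat + b.toNat + a'.toNat + b'.toNat))

/-- `pot x n` is a lower bound for the total defect of a chain of roofs which starts at a hinge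
disjoint from `S`, has met `n` vertices of `S` so far (`4` standing for at least four), and ends at
a hinge with `x` vertices in `S`. -/
def pot : ℕ → ℕ → ℤ
  | 0, 0 => 0 | 0, 1 => 6 | 0, 2 => 10 | 0, 3 => 12 | 0, _ => 14
  | 1, 0 => 3 | 1, 1 => 3 | 1, 2 => 7 | 1, 3 => 9 | 1, _ => 11
  | _, 0 => 6 | _, 1 => 6 | _, 2 => 6 | _, _ => 8

theorem pot_step : ∀ (a b a' b' c : Bool) (n : Fin 5),
    pot (a'.toNat + b'.toNat) (min (n.val + (a'.toNat + b'.toNat + c.toNat)) 4) ≤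
      pot (a.toNat + b.toNat) n.val + roofDefect a b a' b' c := by
  decide +kernel

theorem roofDefect_ge_two : ∀ a b a' b' c : Bool, (a || b) = true → (a' || b') = true →
    2 ≤ roofDefect a b a' b' c := by
  decide

theorem roofDefect_eq : ∀ a b a' b' c : Bool,
    roofDefect a b a' b' c = 3 * (a.toNat + b.toNat) + 3 * (a'.toNat + b'.toNat) + 6 * c.toNat
      - 2 * ((a && a').toNat + (a && b').toNat + (b && a').toNat + (b && b').toNat
        + (c && a).toNat + (c && b).toNat + (c && a').toNat + (c && b').toNat) := by
  decide

theorem sum_zmod_seven_shift {M : Type*} [AddCommMonoid M] (F : ZMod 7 → M) (r : ZMod 7) :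
    ∑ i, F i = ∑ k ∈ Finset.range 7, F (r + k + 1) := by
  rw [← Fin.sum_univ_eq_sum_range (fun k => F (r + (k : ZMod 7) + 1)) 7]
  refine (Fintype.sum_equiv (Equiv.addLeft (r + 1)) (fun k : ZMod 7 => F (r + k + 1))
    F ?_).symm.trans ?_
  · intro k
    simp [add_assoc, add_comm]
  · refine Finset.sum_congr rfl fun k _ => ?_
    congr 3
    exact (ZMod.natCast_zmod_val (n := 7) k).symm

theorem ring_defect_bound (χ : ZMod 7 → Fin 3 → Bool) :
    pot 0 (min (∑ i, ((χ i 0).toNat + (χ i 1).toNat + (χ i 2).toNat)) 4) ≤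
      ∑ i, roofDefect (χ (i - 1) 0) (χ (i - 1) 1) (χ i 0) (χ i 1) (χ i 2) := by
  by_cases h : ∀ i, (χ i 0 || χ i 1) = true
  · have h1 : ∀ n, pot 0 n ≤ 14 := by
      intro n
      unfold pot
      split <;> simp_all
    refine (h1 _).trans ?_
    calc (14 : ℤ) = ∑ i : ZMod 7, 2 := by simp [ZMod.card]
      _ ≤ _ := Finset.sum_le_sum fun i _ => roofDefect_ge_two _ _ _ _ _ (h _) (h _)
  · push Not at h
    obtain ⟨r, hr⟩ := h
    have h0 : χ r 0 = false ∧ χ r 1 = false := by simpa using hr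
    -- Walk once around the ring, starting at the hinge `r`, which avoids `S`.
    have key : ∀ m : ℕ,
        pot ((χ (r + m) 0).toNat + (χ (r + m) 1).toNat)
          (min (∑ k ∈ Finset.range m, ((χ (r + k + 1) 0).toNat + (χ (r + k + 1) 1).toNat
            + (χ (r + k + 1) 2).toNat)) 4) ≤
        ∑ k ∈ Finset.range m, roofDefect (χ (r + k) 0) (χ (r + k) 1) (χ (r + k + 1) 0)
          (χ (r + k + 1) 1) (χ (r + k + 1) 2) := by
      intro m
      induction m with
      | zero => simp [h0, pot]
      | succ m ih =>
        rw [Finset.sum_range_succ, Finset.sum_range_succ]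
        set N := ∑ k ∈ Finset.range m, ((χ (r + k + 1) 0).toNat + (χ (r + k + 1) 1).toNat
            + (χ (r + k + 1) 2).toNat) with hN
        have hs := pot_step (χ (r + m) 0) (χ (r + m) 1) (χ (r + m + 1) 0) (χ (r + m + 1) 1)
          (χ (r + m + 1) 2) ⟨min N 4, by omega⟩
        have e1 : r + ((m + 1 : ℕ) : ZMod 7) = r + m + 1 := by push_cast; ring
        rw [e1]
        have e2 : ∀ q : ℕ, min (min N 4 + q) 4 = min (N + q) 4 := by intro q; omega
        simp only [e2] at hs
        linarith
    have h7 := key 7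
    have e7 : r + ((7 : ℕ) : ZMod 7) = r := by
      rw [ZMod.natCast_self, add_zero]
    rw [e7, h0.1, h0.2] at h7
    rw [sum_zmod_seven_shift _ r, sum_zmod_seven_shift _ r]
    simpa using h7

/-- Every vertex set `S` of `R₇` satisfies `6 |S| - 2 |E(S)| ≥ pot 0 |S|`; in particular `S` spans
at most `3 |S| - 7` edges as soon as `|S| ≥ 4`. -/
theorem ring_sparse (S : Finset (ZMod 7 × Fin 3)) :
    pot 0 (min S.card 4) ≤ 6 * S.card - 2 * spannedEdges S := by
  set χ : ZMod 7 → Fin 3 → Bool := fun i t => decide ((i, t) ∈ S) with hχ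
  have h := ring_defect_bound χ
  have hc : S.card = ∑ i, ((χ i 0).toNat + (χ i 1).toNat + (χ i 2).toNat) := by
    have h1 : S.card = ∑ x : ZMod 7 × Fin 3, (χ x.1 x.2).toNat := by
      simp [hχ, Bool.toNat, Bool.cond_decide]
    rw [h1, Fintype.sum_prod_type]
    simp only [Fin.sum_univ_three]
  have he : spannedEdges S = ∑ i : ZMod 7,
      ((χ (i - 1) 0 && χ i 0).toNat + (χ (i - 1) 0 && χ i 1).toNat
        + (χ (i - 1) 1 && χ i 0).toNat + (χ (i - 1) 1 && χ i 1).toNat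
        + (χ i 2 && χ (i - 1) 0).toNat + (χ i 2 && χ (i - 1) 1).toNat
        + (χ i 2 && χ i 0).toNat + (χ i 2 && χ i 1).toNat) := by
    have h1 : spannedEdges S = ∑ x : ZMod 7 × Fin 8,
        (decide (edgeFst x ∈ S) && decide (edgeSnd x ∈ S)).toNat := by
      rw [spannedEdges, Finset.card_filter]
      refine Finset.sum_congr rfl fun x _ => ?_
      by_cases ha : edgeFst x ∈ S <;> by_cases hb : edgeSnd x ∈ S <;> simp [ha, hb]
    rw [h1, Fintype.sum_prod_type]
    refine Finset.sum_congr rfl fun i _ => ?_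
    rw [Fin.sum_univ_eight]
    rfl
  have hs : ∀ F : ZMod 7 → ℤ, ∑ i, F (i - 1) = ∑ i, F i := fun F =>
    Fintype.sum_equiv (Equiv.subRight 1) _ _ fun _ => rfl
  have hs' := hs fun i => 3 * ((χ i 0).toNat + (χ i 1).toNat)
  rw [← hc] at h
  refine h.trans (le_of_eq ?_)
  clear h
  clear_value χ
  simp only [roofDefect_eq]
  rw [Finset.sum_sub_distrib, Finset.sum_add_distrib, Finset.sum_add_distrib, hs', hc, he,
    Nat.cast_sum, Nat.cast_sum, Finset.mul_sum, Finset.mul_sum, ← Finset.sum_add_distrib,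
    ← Finset.sum_add_distrib, ← Finset.sum_sub_distrib, ← Finset.sum_sub_distrib]
  refine Finset.sum_congr rfl fun i _ => ?_
  push_cast
  ring

theorem spannedEdges_hinge (S : Finset (ZMod 7 × Fin 3)) (j : ZMod 7) (h0 : (j, 0) ∈ S)
    (h1 : (j, 1) ∈ S) (hc : S.card = 2) : spannedEdges S = 0 := by
  have hS : S = {(j, 0), (j, 1)} := by
    symm
    apply Finset.eq_of_subset_of_card_le
    · intro x hx
      simp only [Finset.mem_insert, Finset.mem_singleton] at hx
      rcases hx with rfl | rfl <;> assumption
    · rw [hc, Finset.card_pair (by simp)]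
  rw [spannedEdges, Finset.card_eq_zero, Finset.filter_eq_empty_iff]
  rintro e -
  rw [hS]
  simpa using edge_ne_hinge e j

/-! ### Self-stresses of the roofs -/

theorem exists_affine_dependence (P : Fin 5 → Fin 3 → ℝ) :
    ∃ l : Fin 5 → ℝ, l ≠ 0 ∧ ∑ s, l s = 0 ∧ ∀ c, ∑ s, l s * P s c = 0 := by
  let M : Matrix (Fin 4) (Fin 5) ℝ := fun r s => (Fin.cons 1 (P s) : Fin 4 → ℝ) r
  obtain ⟨l, hlk, hl⟩ := Submodule.exists_mem_ne_zero_of_ne_bot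
    (LinearMap.ker_ne_bot_of_finrank_lt (f := M.mulVecLin) (by simp))
  have h : M.mulVec l = 0 := hlk
  refine ⟨l, hl, ?_, fun c => ?_⟩
  · have := congrFun h 0
    simpa [M, Matrix.mulVec, dotProduct] using this
  · have := congrFun h c.succ
    simpa [M, Matrix.mulVec, dotProduct, mul_comm] using this

/-- The complete graph on the vertices of a roof carries the self-stress with coefficients
`l s * l t`, where `l` is an affine dependence of the five points. Moving the two hinges to the
other side expresses a combination of the hinge rows through the rows of the roof, nontrivially if
no hinge is degenerate. -/
theorem roof_stress {W : Type*} [DecidableEq W] (p : W → Fin 3 → ℝ) (A B A' B' C : W)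
    (h : p A ≠ p B) (h' : p A' ≠ p B') :
    ∃ ω : Fin 8 → ℝ, ω ≠ 0 ∧ ∃ α β : ℝ,
      ω 0 • rigidityRow p A A' + ω 1 • rigidityRow p A B' + ω 2 • rigidityRow p B A'
      + ω 3 • rigidityRow p B B' + ω 4 • rigidityRow p C A + ω 5 • rigidityRow p C B
      + ω 6 • rigidityRow p C A' + ω 7 • rigidityRow p C B'
      = α • rigidityRow p A B + β • rigidityRow p A' B' := by
  obtain ⟨l, hl, hsum, hP⟩ := exists_affine_dependence ![p A, p B, p A', p B', p C]
  simp only [Fin.sum_univ_five] at hsum hP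
  simp at hP
  refine ⟨![l 0 * l 2, l 0 * l 3, l 1 * l 2, l 1 * l 3, l 4 * l 0, l 4 * l 1, l 4 * l 2,
    l 4 * l 3], ?_, -(l 0 * l 1), -(l 2 * l 3), ?_⟩
  · intro hω
    have w : ∀ e, _ = (0 : ℝ) := fun e => congrFun hω e
    have w0 := w 0; have w1 := w 1; have w2 := w 2; have w3 := w 3
    have w4 := w 4; have w5 := w 5; have w6 := w 6; have w7 := w 7
    simp at w0 w1 w2 w3 w4 w5 w6 w7
    have l4 : l 4 = 0 := by
      by_contra h4
      simp only [h4, false_or] at w4 w5 w6 w7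
      rw [w4, w5, w6, w7] at hsum
      exact h4 (by linarith)
    -- With `l 4 = 0`, the support of `l` is contained in one of the two hinges.
    by_cases h01 : l 0 = 0 ∧ l 1 = 0
    · have e3 : l 3 = - l 2 := by rw [h01.1, h01.2, l4] at hsum; linarith
      have l2 : l 2 ≠ 0 := by
        intro l2
        apply hl
        ext s
        fin_cases s <;> simp [h01, l2, l4, e3]
      apply h'
      ext c
      have := hP c
      rw [h01.1, h01.2, l4, e3] at this
      apply mul_left_cancel₀ l2
      linarith
    · have h23 : l 2 = 0 ∧ l 3 = 0 := by tauto
      have e1 : l 1 = - l 0 := by rw [h23.1, h23.2, l4] at hsum; linarith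
      have l0 : l 0 ≠ 0 := by
        intro l0
        exact h01 ⟨l0, by rw [e1, l0, neg_zero]⟩
      apply h
      ext c
      have := hP c
      rw [h23.1, h23.2, l4, e1] at this
      apply mul_left_cancel₀ l0
      linarith
  · ext k c
    have hc := hP c
    simp only [Pi.add_apply, Pi.smul_apply, rigidityRow_apply, smul_eq_mul]
    simp
    generalize (if k = A then (1 : ℝ) else 0) = a
    generalize (if k = B then (1 : ℝ) else 0) = b
    generalize (if k = A' then (1 : ℝ) else 0) = a'
    generalize (if k = B' then (1 : ℝ) else 0) = b'
    generalize (if k = C then (1 : ℝ) else 0) = d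
    linear_combination (l 0 * a * p A c + l 1 * b * p B c + l 2 * a' * p A' c
      + l 3 * b' * p B' c + l 4 * d * p C c) * hsum
      - (l 0 * a + l 1 * b + l 2 * a' + l 3 * b' + l 4 * d) * hc

/-- If the rows of a ring are independent and no hinge is degenerate, the seven roof stresses show
that the row of every hinge lies in the span of the rows of the ring. -/
theorem hinge_mem_span {W : Type*} [DecidableEq W] (p : W → Fin 3 → ℝ)
    (f : ZMod 7 × Fin 3 → W) (hp : ∀ i, p (f (i, 0)) ≠ p (f (i, 1)))
    (hli : LinearIndependent ℝ fun e => rigidityRow p (f (edgeFst e)) (f (edgeSnd e)))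
    (i : ZMod 7) :
    rigidityRow p (f (i, 0)) (f (i, 1)) ∈
      Submodule.span ℝ (Set.range fun e => rigidityRow p (f (edgeFst e)) (f (edgeSnd e))) := by
  set r := fun e => rigidityRow p (f (edgeFst e)) (f (edgeSnd e)) with hr
  set h := fun i => rigidityRow p (f (i, 0)) (f (i, 1)) with hh
  have hst : ∀ i : ZMod 7, ∃ ω : Fin 8 → ℝ, ω ≠ 0 ∧ ∃ α β : ℝ,
      ∑ e, ω e • r (i, e) = α • h (i - 1) + β • h i := by
    intro i
    obtain ⟨ω, hω, α, β, H⟩ := roof_stress p (f (i - 1, 0)) (f (i - 1, 1)) (f (i, 0)) (f (i, 1))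
      (f (i, 2)) (hp _) (hp _)
    refine ⟨ω, hω, α, β, ?_⟩
    rw [Fin.sum_univ_eight]
    exact H
  choose ω hω α β H using hst
  let x : ZMod 7 → (W → Fin 3 → ℝ) := fun i => ∑ e, ω i e • r (i, e)
  have hx : LinearIndependent ℝ x := by
    rw [Fintype.linearIndependent_iff]
    intro c hc i
    have h0 : ∑ y : ZMod 7 × Fin 8, (c y.1 * ω y.1 y.2) • r y = 0 := by
      rw [Fintype.sum_prod_type, ← hc]
      refine Finset.sum_congr rfl fun i _ => ?_
      simp only [x, Finset.smul_sum, smul_smul]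
    have h1 := Fintype.linearIndependent_iff.1 hli _ h0
    obtain ⟨e, he⟩ := Function.ne_iff.1 (hω i)
    exact (mul_eq_zero.1 (h1 (i, e))).resolve_right he
  have hle : Submodule.span ℝ (Set.range x) ≤ Submodule.span ℝ (Set.range h) := by
    rw [Submodule.span_le]
    rintro _ ⟨i, rfl⟩
    simp only [x, H]
    exact Submodule.add_mem _ (Submodule.smul_mem _ _ (Submodule.subset_span ⟨_, rfl⟩))
      (Submodule.smul_mem _ _ (Submodule.subset_span ⟨_, rfl⟩))
  have hfin : FiniteDimensional ℝ (Submodule.span ℝ (Set.range h)) :=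
    FiniteDimensional.span_of_finite ℝ (Set.finite_range h)
  have heq : Submodule.span ℝ (Set.range x) = Submodule.span ℝ (Set.range h) := by
    apply Submodule.eq_of_le_of_finrank_le hle
    rw [finrank_span_eq_card hx]
    exact finrank_range_le_card h
  have hmem : h i ∈ Submodule.span ℝ (Set.range x) := by
    rw [heq]
    exact Submodule.subset_span ⟨i, rfl⟩
  refine (Submodule.span_le.2 ?_) hmem
  rintro _ ⟨i, rfl⟩
  exact Submodule.sum_mem _ fun e _ => Submodule.smul_mem _ _ (Submodule.subset_span ⟨_, rfl⟩)

/-- Independence of the rows is an open condition, so it persists at some injective placement. -/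
theorem exists_injective_linearIndependent {W ι : Type*} [Fintype W] [DecidableEq W] [Finite ι]
    (u v : ι → W) (p : W → Fin 3 → ℝ)
    (h : LinearIndependent ℝ fun e => rigidityRow p (u e) (v e)) :
    ∃ q : W → Fin 3 → ℝ, Function.Injective q ∧
      LinearIndependent ℝ fun e => rigidityRow q (u e) (v e) := by
  let d : W → Fin 3 → ℝ := fun w _ => ((Fintype.equivFin W w : ℕ) : ℝ)
  have hd : ∀ w w', w ≠ w' → d w 0 ≠ d w' 0 := by
    intro w w' hw he
    apply hw
    simpa [d, Fin.val_inj] using he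
  have hcont : Continuous fun t : ℝ => fun e => rigidityRow (p + t • d) (u e) (v e) := by
    refine continuous_pi fun e => continuous_pi fun k => continuous_pi fun c => ?_
    simp only [rigidityRow_apply, Pi.add_apply, Pi.smul_apply]
    fun_prop
  have hopen : IsOpen {t : ℝ | LinearIndependent ℝ
      fun e => rigidityRow (p + t • d) (u e) (v e)} :=
    (isOpen_setOfPred_linearIndependent (𝕜 := ℝ) (E := W → Fin 3 → ℝ) (ι := ι)).preimage hcont
  have hinf := infinite_of_mem_nhds (0 : ℝ) (hopen.mem_nhds (by simpa using h))
  have hbad : (⋃ w : W, ⋃ w' : W,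
      {t : ℝ | w ≠ w' ∧ p w 0 + t * d w 0 = p w' 0 + t * d w' 0}).Finite := by
    refine Set.finite_iUnion fun w => Set.finite_iUnion fun w' => Set.Subsingleton.finite ?_
    rintro s ⟨hw, hs⟩ t ⟨-, ht⟩
    apply mul_right_cancel₀ (sub_ne_zero.2 (hd w w' hw))
    linarith
  obtain ⟨t, ht, htb⟩ := hinf.exists_notMem_finite hbad
  refine ⟨p + t • d, fun w w' hw => ?_, ht⟩
  by_contra hne
  exact htb (Set.mem_iUnion.2 ⟨w, Set.mem_iUnion.2 ⟨w', hne, congrFun hw 0⟩⟩)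

/-! ### The double ring -/

/-- **The double-ring of 14 roofs is nucleation-free and dependent in ℝ³.**
`D` is obtained from two disjoint copies of the ring of seven roofs `R₇` by
identifying the two vertices of a hinge non-edge `{(i,0),(i,1)}` of the first copy
with the two vertices of a hinge non-edge `{(j,0),(j,1)}` of the second copy
(and nothing else). -/
theorem doubleRing_nucleationFree_dependent {W : Type*} [Fintype W] [DecidableEq W]
    (D : SimpleGraph W) (f g : ZMod 7 × Fin 3 → W)
    (hglue : IsGlue (ringOfRoofs 7) (ringOfRoofs 7) D f g)
    (i j : ZMod 7)
    (hid : (f (i, 0) = g (j, 0) ∧ f (i, 1) = g (j, 1)) ∨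
           (f (i, 0) = g (j, 1) ∧ f (i, 1) = g (j, 0)))
    (honly : ∀ x y, f x = g y →
      (x = (i, 0) ∨ x = (i, 1)) ∧ (y = (j, 0) ∨ y = (j, 1))) :
    NucleationFree D ∧ genRank D < numEdges D := by
  have hadj : ∀ x y, D.Adj x y → ∃ e : (ZMod 7 × Fin 8) ⊕ (ZMod 7 × Fin 8),
      (Sum.elim (f ∘ edgeFst) (g ∘ edgeFst) e = x ∧ Sum.elim (f ∘ edgeSnd) (g ∘ edgeSnd) e = y) ∨
      (Sum.elim (f ∘ edgeFst) (g ∘ edgeFst) e = y ∧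
        Sum.elim (f ∘ edgeSnd) (g ∘ edgeSnd) e = x) := by
    intro x y hxy
    rcases (hglue.adj_iff x y).1 hxy with ⟨x, y, rfl, rfl, h⟩ | ⟨x, y, rfl, rfl, h⟩
    · obtain ⟨e, ⟨rfl, rfl⟩ | ⟨rfl, rfl⟩⟩ := (ring_adj_iff x y).1 h
      · exact ⟨Sum.inl e, by simp⟩
      · exact ⟨Sum.inl e, by simp⟩
    · obtain ⟨e, ⟨rfl, rfl⟩ | ⟨rfl, rfl⟩⟩ := (ring_adj_iff x y).1 h
      · exact ⟨Sum.inr e, by simp⟩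
      · exact ⟨Sum.inr e, by simp⟩
  set u := Sum.elim (f ∘ edgeFst) (g ∘ edgeFst) with hu
  set v := Sum.elim (f ∘ edgeSnd) (g ∘ edgeSnd) with hv
  constructor
  · intro T hT
    have hrank : genRank (D.induce (T : Set W)) ≤
        Fintype.card {e // u e ∈ T ∧ v e ∈ T} := by
      refine genRank_le _ _ fun p => ?_
      refine (rankAt_le_finrank_span _ p
        (fun e : {e // u e ∈ T ∧ v e ∈ T} => (⟨u e, e.2.1⟩ : (T : Set W)))
        (fun e => ⟨v e, e.2.2⟩) ?_).trans (finrank_range_le_card _)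
      rintro ⟨x, hx⟩ ⟨y, hy⟩ hxy
      obtain ⟨e, ⟨h1, h2⟩ | ⟨h1, h2⟩⟩ := hadj x y hxy
      · exact ⟨⟨e, by rw [h1, h2]; exact ⟨hx, hy⟩⟩, Or.inl ⟨Subtype.ext h1, Subtype.ext h2⟩⟩
      · exact ⟨⟨e, by rw [h1, h2]; exact ⟨hy, hx⟩⟩, Or.inr ⟨Subtype.ext h1, Subtype.ext h2⟩⟩
    set S₁ := Finset.univ.filter fun x => f x ∈ T with hS₁
    set S₂ := Finset.univ.filter fun x => g x ∈ T with hS₂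
    have hcard : Fintype.card {e // u e ∈ T ∧ v e ∈ T} = spannedEdges S₁ + spannedEdges S₂ := by
      rw [Fintype.card_subtype, Finset.card_filter, Fintype.sum_sum_type]
      rw [spannedEdges, spannedEdges, Finset.card_filter, Finset.card_filter]
      simp only [hu, hv, hS₁, hS₂, Finset.mem_filter, Finset.mem_univ, true_and, Sum.elim_inl,
        Sum.elim_inr, Function.comp_apply]
    have hunion : S₁.image f ∪ S₂.image g = T := by
      ext w
      simp only [Finset.mem_union, Finset.mem_image, hS₁, hS₂, Finset.mem_filter,
        Finset.mem_univ, true_and]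
      constructor
      · rintro (⟨x, hx, rfl⟩ | ⟨x, hx, rfl⟩) <;> exact hx
      · intro hw
        rcases hglue.cover w with ⟨x, rfl⟩ | ⟨x, rfl⟩
        · exact Or.inl ⟨x, hw, rfl⟩
        · exact Or.inr ⟨x, hw, rfl⟩
    have hci := Finset.card_union_add_card_inter (S₁.image f) (S₂.image g)
    rw [hunion, Finset.card_image_of_injective _ hglue.f_inj,
      Finset.card_image_of_injective _ hglue.g_inj] at hci
    have hsub : S₁.image f ∩ S₂.image g ⊆ {f (i, 0), f (i, 1)} := by
      intro w hw
      simp only [Finset.mem_inter, Finset.mem_image] at hw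
      obtain ⟨⟨x, -, rfl⟩, y, -, hy⟩ := hw
      rcases (honly x y hy.symm).1 with rfl | rfl <;> simp
    have ht2 := (Finset.card_le_card hsub).trans Finset.card_le_two
    have ht1 : (S₁.image f ∩ S₂.image g).card ≤ S₁.card :=
      (Finset.card_le_card Finset.inter_subset_left).trans Finset.card_image_le
    have ht1' : (S₁.image f ∩ S₂.image g).card ≤ S₂.card :=
      (Finset.card_le_card Finset.inter_subset_right).trans Finset.card_image_le
    -- A pair consisting of the two vertices of the common hinge spans no edge.
    have hfull : (S₁.image f ∩ S₂.image g).card = 2 →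
        (S₁.card = 2 → spannedEdges S₁ = 0) ∧ (S₂.card = 2 → spannedEdges S₂ = 0) := by
      intro h2
      have heq := Finset.eq_of_subset_of_card_le hsub (by rw [h2]; exact Finset.card_le_two)
      have hm : f (i, 0) ∈ T ∧ f (i, 1) ∈ T := by
        have h3 : ({f (i, 0), f (i, 1)} : Finset W) ⊆ T := by
          rw [← heq, ← hunion]
          exact Finset.inter_subset_left.trans Finset.subset_union_left
        exact ⟨h3 (by simp), h3 (by simp)⟩
      refine ⟨spannedEdges_hinge S₁ i (by simp [hS₁, hm]) (by simp [hS₁, hm]),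
        spannedEdges_hinge S₂ j ?_ ?_⟩ <;>
      rcases hid with ⟨h0, h1⟩ | ⟨h0, h1⟩ <;> simp [hS₂, ← h0, ← h1, hm]
    have hs1 := ring_sparse S₁
    have hs2 := ring_sparse S₂
    have hpot : ∀ n : ℕ, ∃ a : ℤ, pot 0 (min n 4) = a ∧ 0 ≤ a ∧ (1 ≤ n → 6 ≤ a) ∧
        (2 ≤ n → 10 ≤ a) ∧ (3 ≤ n → 12 ≤ a) ∧ (4 ≤ n → 14 ≤ a) := by
      intro n
      refine ⟨_, rfl, ?_⟩
      have : n = 0 ∨ n = 1 ∨ n = 2 ∨ n = 3 ∨ 4 ≤ n := by omega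
      rcases this with rfl | rfl | rfl | rfl | h
      · simp [pot]
      · simp [pot]
      · simp [pot]
      · simp [pot]
      · rw [min_eq_right h]
        simp [pot]
    obtain ⟨a, ha, ha'⟩ := hpot S₁.card
    obtain ⟨b, hb, hb'⟩ := hpot S₂.card
    rw [ha] at hs1
    rw [hb] at hs2
    rw [hcard] at hrank
    omega
  · have h112 : 112 ≤ numEdges D := by
      let F : (ZMod 7 × Fin 8) ⊕ (ZMod 7 × Fin 8) → Sym2 W := fun e => s(u e, v e)
      have hF : Function.Injective F := by
        have hx : ∀ e e', F (Sum.inl e) ≠ F (Sum.inr e') := by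
          intro e e' he
          simp only [F, hu, hv, Sum.elim_inl, Sum.elim_inr, Function.comp_apply, Sym2.eq_iff] at he
          rcases he with ⟨h1, h2⟩ | ⟨h1, h2⟩ <;>
          exact edge_ne_hinge e i ⟨(honly _ _ h1).1, (honly _ _ h2).1⟩
        rintro (e | e) (e' | e') he
        · congr 1
          simp only [F, hu, hv, Sum.elim_inl, Function.comp_apply, Sym2.eq_iff,
            hglue.f_inj.eq_iff] at he
          exact edge_injective e e' he
        · exact absurd he (hx _ _)
        · exact absurd he.symm (hx _ _)
        · congr 1
          simp only [F, hu, hv, Sum.elim_inr, Function.comp_apply, Sym2.eq_iff,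
            hglue.g_inj.eq_iff] at he
          exact edge_injective e e' he
      have hsub : Set.range F ⊆ D.edgeSet := by
        rintro _ ⟨e | e, rfl⟩
        · exact (hglue.adj_iff _ _).2 (Or.inl ⟨_, _, rfl, rfl,
            (ring_adj_iff _ _).2 ⟨e, Or.inl ⟨rfl, rfl⟩⟩⟩)
        · exact (hglue.adj_iff _ _).2 (Or.inr ⟨_, _, rfl, rfl,
            (ring_adj_iff _ _).2 ⟨e, Or.inl ⟨rfl, rfl⟩⟩⟩)
      calc 112 = Nat.card ((ZMod 7 × Fin 8) ⊕ (ZMod 7 × Fin 8)) := by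
            simp [Nat.card_eq_fintype_card, ZMod.card]
        _ = (Set.range F).ncard := (Set.ncard_range_of_injective hF).symm
        _ ≤ _ := Set.ncard_le_ncard hsub (Set.toFinite _)
    refine lt_of_le_of_lt (genRank_le D 111 fun p => ?_) (by omega)
    by_contra hlt
    have hle := rankAt_le_finrank_span D p u v hadj
    have hli : LinearIndependent ℝ fun e => rigidityRow p (u e) (v e) := by
      rw [linearIndependent_iff_card_le_finrank_span]
      have : Fintype.card ((ZMod 7 × Fin 8) ⊕ (ZMod 7 × Fin 8)) = 112 := by simp [ZMod.card]
      rw [Set.finrank]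
      omega
    obtain ⟨q, hq, hqli⟩ := exists_injective_linearIndependent u v p hli
    rw [linearIndependent_sum] at hqli
    obtain ⟨h1, h2, hdisj⟩ := hqli
    have hne : ∀ φ : ZMod 7 × Fin 3 → W, Function.Injective φ →
        ∀ k, q (φ (k, 0)) ≠ q (φ (k, 1)) := by
      intro φ hφ k hk
      simpa using hφ (hq hk)
    have m1 := hinge_mem_span q f (hne f hglue.f_inj) h1 i
    have m2 := hinge_mem_span q g (hne g hglue.g_inj) h2 j
    have hrow : rigidityRow q (g (j, 0)) (g (j, 1)) = rigidityRow q (f (i, 0)) (f (i, 1)) := by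
      rcases hid with ⟨e0, e1⟩ | ⟨e0, e1⟩
      · rw [e0, e1]
      · rw [e0, e1, rigidityRow_comm]
    rw [hrow] at m2
    have hzero := Submodule.disjoint_def.1 hdisj _ m1 m2
    apply hne f hglue.f_inj i
    have h3 := congrFun hzero (f (i, 0))
    simpa [rigidityRow, sub_eq_zero] using h3
end

section
/- There exists a finite simple graph G = (V,E) such that: G is nucleation-free; every subgraph (V′,E′) of G with |V′| ≥ 3 satisfies Maxwell's count |E′| ≤ 3|V′| − 6; G has exactly |E| = 3|V| − 6 edges; and yet G is not rigid in ℝ³, i.e., rk₃(G) < 3|V| − 6 (so G is dependent). In particular, Maxwell's counting condition is insufficient for 3D rigidity even in the absence of any nucleation. -/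
/-!
A *roof* is `K₅` minus two disjoint edges, its *hinges*; its fifth vertex is the apex. The graph `G`
is a theta graph of roofs: eleven hinges, two of them branch hinges joined by three paths of four
roofs each, consecutive roofs sharing a hinge pair. It has `2 * 11 + 12 = 34` vertices and
`8 * 12 = 96 = 3 * 34 - 6` edges, the hinge pairs being non-adjacent.

*Dependence.* Five points of ℝ³ have an affine dependency `l`, and `l i * l j` is then a stress of
`K₅`. Twelve roofs against eleven hinges leave a nontrivial combination of these stresses that
vanishes on every hinge, hence is supported on `G`. It is nonzero when the points are distinct,
since a nonzero `l` whose products vanish on all roof edges lives on a hinge and forces its two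
points to coincide (`not_linearIndependent_of_injective`). Independence of the rows is an open
condition and injective placements are dense, so the rows are dependent at every placement
(`not_linearIndependent`) and `G` has rank at most 95.

*Sparsity.* The number of edges induced on `S` depends only on how many vertices of `S` lie on each
hinge and apex. Given the numbers on the two branch hinges, the three paths contribute separately;
`pathBound` bounds one path and `sparse_of_pathBound` adds up three. The result is `|E(S)| ≤ 3|S| - 6`
for `|S| ≥ 3`, with strict inequality for `5 ≤ |S| < 34` (`induce_sparse`). So no proper induced
subgraph on five or more vertices has enough edges to be rigid, and `G` itself is not rigid because
it is dependent.
-/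

open SimpleGraph

variable {V : Type*}

namespace RoofTheta

/-! ### The graph -/

/-- The hinge at the left end of a roof. Hinges `0` and `1` are the branch hinges of the theta
graph; roofs `4j, …, 4j+3` form its `j`-th path, with interior hinges `3j+2, 3j+3, 3j+4`. -/
def lh : Fin 12 → Fin 11 := ![0, 2, 3, 4, 0, 5, 6, 7, 0, 8, 9, 10]

/-- The hinge at the right end of a roof. -/
def rh : Fin 12 → Fin 11 := ![2, 3, 4, 1, 5, 6, 7, 1, 8, 9, 10, 1]

/-- The two vertices of a hinge. -/
def hv (h : Fin 11) (b : Fin 2) : Fin 34 := ⟨2 * h + b, by omega⟩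

/-- The apex of a roof, the only one of its vertices lying on no hinge. -/
def apex (r : Fin 12) : Fin 34 := ⟨22 + r, by omega⟩

/-- The five vertices of a roof: `0, 1` span its left hinge, `2, 3` its right hinge, `4` is the
apex. -/
def roofV (r : Fin 12) : Fin 5 → Fin 34 :=
  ![hv (lh r) 0, hv (lh r) 1, hv (rh r) 0, hv (rh r) 1, apex r]

/-- First endpoints of the eight edges of `K₅` minus the two hinge pairs `{0,1}` and `{2,3}`. -/
def src : Fin 8 → Fin 5 := ![0, 0, 1, 1, 0, 1, 2, 3]

/-- Second endpoints of the eight edges of `K₅` minus the two hinge pairs. -/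
def tgt : Fin 8 → Fin 5 := ![2, 3, 2, 3, 4, 4, 4, 4]

/-- First endpoint of the `e.2`-th edge of the roof `e.1`. -/
def eU (e : Fin 12 × Fin 8) : Fin 34 := roofV e.1 (src e.2)
/-- Second endpoint of the `e.2`-th edge of the roof `e.1`. -/
def eV (e : Fin 12 × Fin 8) : Fin 34 := roofV e.1 (tgt e.2)

/-- The union of the twelve roofs. -/
def G : SimpleGraph (Fin 34) :=
  SimpleGraph.fromEdgeSet (Set.range fun e => s(eU e, eV e))

theorem eU_ne_eV : ∀ e, eU e ≠ eV e := by decide +kernel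

theorem edge_injective : Function.Injective fun e => s(eU e, eV e) := by
  unfold Function.Injective
  decide +kernel

theorem G_adj {i j : Fin 34} : G.Adj i j ↔ ∃ e, s(eU e, eV e) = s(i, j) := by
  simp only [G, SimpleGraph.fromEdgeSet_adj, Set.mem_range]
  refine ⟨fun h => h.1, fun ⟨e, he⟩ => ⟨⟨e, he⟩, ?_⟩⟩
  rintro rfl
  have := eU_ne_eV e
  rw [Sym2.eq_iff] at he
  rcases he with ⟨h1, h2⟩ | ⟨h1, h2⟩ <;> exact this (h1.trans h2.symm)

theorem G_edgeSet : G.edgeSet = Set.range fun e => s(eU e, eV e) := by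
  ext x
  induction x with
  | _ i j => rw [SimpleGraph.mem_edgeSet, G_adj]; rfl

theorem numEdges_G : numEdges G = 96 := by
  rw [numEdges, G_edgeSet, ← Set.image_univ, Set.ncard_image_of_injective _ edge_injective,
    Set.ncard_univ]
  simp

/-! ### Rank bounds -/

theorem rigidityRow_eq [DecidableEq V] (p : V → Fin 3 → ℝ) (i j : V) :
    rigidityRow p i j = Pi.single i (p i - p j) - Pi.single j (p i - p j) := by
  funext k
  by_cases h1 : k = i <;> by_cases h2 : k = j
  · subst h1; subst h2; simp [rigidityRow]
  · subst h1; simp [rigidityRow, h2]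
  · subst h2; simp [rigidityRow, h1]
  · simp [rigidityRow, h1, h2]

theorem rigidityRow_comm [DecidableEq V] (p : V → Fin 3 → ℝ) (i j : V) :
    rigidityRow p i j = rigidityRow p j i := by
  rw [rigidityRow_eq, rigidityRow_eq, ← neg_sub (p i) (p j), Pi.single_neg, Pi.single_neg]
  abel

theorem genRank_le [DecidableEq V] (H : SimpleGraph V) (b : ℕ) (h : ∀ p, rankAt H p ≤ b) :
    genRank H ≤ b := by
  refine csSup_le ⟨_, fun _ => 0, rfl⟩ ?_
  rintro n ⟨p, rfl⟩
  exact h p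

theorem genRank_le_numEdges [DecidableEq V] [Finite V] (H : SimpleGraph V) :
    genRank H ≤ numEdges H := by
  refine genRank_le _ _ fun p => ?_
  have hsub : {w : V → Fin 3 → ℝ | ∃ i j, H.Adj i j ∧ w = rigidityRow p i j} =
      (fun e : Sym2 V => e.lift ⟨rigidityRow p, rigidityRow_comm p⟩) '' H.edgeSet := by
    ext w
    constructor
    · rintro ⟨i, j, hij, rfl⟩
      exact ⟨s(i, j), hij, rfl⟩
    · rintro ⟨e, he, rfl⟩
      induction e with
      | _ i j => exact ⟨i, j, he, rfl⟩
  have hfin : (H.edgeSet).Finite := Set.toFinite _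
  rw [rankAt, hsub, numEdges]
  have := (hfin.image fun e : Sym2 V => e.lift ⟨rigidityRow p, rigidityRow_comm p⟩).fintype
  refine (finrank_span_le_card _).trans ?_
  rw [← Set.ncard_eq_toFinset_card']
  exact Set.ncard_image_le hfin

/-- Rank bounds transfer along graph isomorphisms; needed because the subgraph induced on all
vertices is only isomorphic to the graph itself. -/
theorem genRank_congr_le {W : Type*} [DecidableEq V] [DecidableEq W] {H : SimpleGraph V}
    {K : SimpleGraph W} (φ : H ≃g K) (b : ℕ) (h : ∀ p, rankAt K p ≤ b) : genRank H ≤ b := by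
  refine genRank_le _ _ fun p => ?_
  refine le_trans (le_of_eq ?_) (h (p ∘ φ.symm))
  let L : (V → Fin 3 → ℝ) ≃ₗ[ℝ] (W → Fin 3 → ℝ) :=
    LinearEquiv.funCongrLeft ℝ (Fin 3 → ℝ) φ.symm.toEquiv
  have hL : ∀ i j, L (rigidityRow p i j) = rigidityRow (p ∘ φ.symm) (φ i) (φ j) := by
    intro i j
    funext k
    have e1 : φ.symm k = i ↔ k = φ i := by
      constructor
      · rintro rfl; simp
      · rintro rfl; simp
    have e2 : φ.symm k = j ↔ k = φ j := by
      constructor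
      · rintro rfl; simp
      · rintro rfl; simp
    change rigidityRow p i j (φ.symm k) = _
    simp [rigidityRow, e1, e2]
  have hset : {w : W → Fin 3 → ℝ | ∃ i j, K.Adj i j ∧ w = rigidityRow (p ∘ φ.symm) i j} =
      L '' {w : V → Fin 3 → ℝ | ∃ i j, H.Adj i j ∧ w = rigidityRow p i j} := by
    ext w
    constructor
    · rintro ⟨i, j, hij, rfl⟩
      refine ⟨_, ⟨φ.symm i, φ.symm j, φ.symm.map_adj_iff.2 hij, rfl⟩, ?_⟩
      rw [hL]; simp
    · rintro ⟨_, ⟨i, j, hij, rfl⟩, rfl⟩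
      exact ⟨φ i, φ j, φ.map_adj_iff.2 hij, hL i j⟩
  rw [rankAt, rankAt, hset, ← LinearEquiv.coe_coe, Submodule.span_image]
  exact (LinearEquiv.finrank_map_eq L _).symm

/-! ### The dependency -/

/-- The rigidity rows of the edges of `G`. -/
def rows (p : Fin 34 → Fin 3 → ℝ) (e : Fin 12 × Fin 8) : Fin 34 → Fin 3 → ℝ :=
  rigidityRow p (eU e) (eV e)

/-- Five points of ℝ³ satisfy a nontrivial affine dependency. -/
theorem exists_affine_dep (q : Fin 5 → Fin 3 → ℝ) :
    ∃ l : Fin 5 → ℝ, l ≠ 0 ∧ ∑ i, l i = 0 ∧ ∑ i, l i • q i = 0 := by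
  let f : (Fin 5 → ℝ) →ₗ[ℝ] ℝ × (Fin 3 → ℝ) :=
    { toFun := fun l => (∑ i, l i, ∑ i, l i • q i)
      map_add' := fun x y => by simp [Finset.sum_add_distrib, add_smul]
      map_smul' := fun c x => by simp [Finset.mul_sum, Finset.smul_sum, mul_smul] }
  have hf : LinearMap.ker f ≠ ⊥ := LinearMap.ker_ne_bot_of_finrank_lt (by simp)
  obtain ⟨l, hl, hl0⟩ := (Submodule.ne_bot_iff _).1 hf
  have h : (∑ i, l i, ∑ i, l i • q i) = (0 : ℝ × (Fin 3 → ℝ)) := hl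
  rw [Prod.mk_eq_zero] at h
  exact ⟨l, hl0, h.1, h.2⟩

/-- An affine dependency `l` of five points gives the stress `l i * l j` of `K₅`: each row of the
equilibrium equations is `l i * ((∑ l j) • q i - ∑ l j • q j) = 0`. -/
theorem sum_stress_eq_zero [DecidableEq V] (p : V → Fin 3 → ℝ) (v : Fin 5 → V) (l : Fin 5 → ℝ)
    (h0 : ∑ i, l i = 0) (h1 : ∑ i, l i • p (v i) = 0) :
    ∑ i, ∑ j, (l i * l j) • rigidityRow p (v i) (v j) = 0 := by
  have key : ∀ i, ∑ j, (l i * l j) • (Pi.single (v i) (p (v i) - p (v j)) : V → Fin 3 → ℝ) = 0 := by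
    intro i
    have : ∀ j, (l i * l j) • (Pi.single (v i) (p (v i) - p (v j)) : V → Fin 3 → ℝ) =
        LinearMap.single ℝ (fun _ : V => Fin 3 → ℝ) (v i)
          (l i • (l j • p (v i) - l j • p (v j))) := by
      intro j
      rw [← smul_sub, map_smul, map_smul, mul_smul]
      rfl
    simp only [this]
    rw [← map_sum, ← Finset.smul_sum, Finset.sum_sub_distrib, ← Finset.sum_smul, h0, h1]
    simp
  simp only [rigidityRow_eq, smul_sub, Finset.sum_sub_distrib, key, zero_sub,
    Finset.sum_neg_distrib, neg_eq_zero]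
  rw [Finset.sum_comm]
  refine Finset.sum_eq_zero fun j _ => ?_
  rw [← neg_eq_zero, ← Finset.sum_neg_distrib, ← key j]
  refine Finset.sum_congr rfl fun i _ => ?_
  rw [← neg_sub (p (v j)), Pi.single_neg, smul_neg, neg_neg, mul_comm]

/-- The stress of `K₅` with the two hinge pairs moved to the other side. -/
theorem roof_stress [DecidableEq V] (p : V → Fin 3 → ℝ) (v : Fin 5 → V) (l : Fin 5 → ℝ)
    (h0 : ∑ i, l i = 0) (h1 : ∑ i, l i • p (v i) = 0) :
    ∑ k, (l (src k) * l (tgt k)) • rigidityRow p (v (src k)) (v (tgt k)) =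
      - ((l 0 * l 1) • rigidityRow p (v 0) (v 1) + (l 2 * l 3) • rigidityRow p (v 2) (v 3)) := by
  have h := sum_stress_eq_zero p v l h0 h1
  have hd : ∀ i, rigidityRow p i i = 0 := fun i => by rw [rigidityRow_eq]; simp
  simp only [Fin.sum_univ_five, hd, rigidityRow_comm p (v 1) (v 0), rigidityRow_comm p (v 2) (v 0),
    rigidityRow_comm p (v 3) (v 0), rigidityRow_comm p (v 4) (v 0), rigidityRow_comm p (v 2) (v 1),
    rigidityRow_comm p (v 3) (v 1), rigidityRow_comm p (v 4) (v 1), rigidityRow_comm p (v 3) (v 2),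
    rigidityRow_comm p (v 4) (v 2), rigidityRow_comm p (v 4) (v 3)] at h
  simp only [Fin.sum_univ_eight, src, tgt, Matrix.cons_val]
  linear_combination (norm := module) (1 / 2 : ℝ) • h

/-- The stress induced by a nonzero affine dependency of distinct points does not vanish on all
roof edges: otherwise the dependency would be supported on a hinge, forcing its two points to
coincide. -/
theorem roof_stress_ne_zero (q : Fin 5 → Fin 3 → ℝ) (hq : Function.Injective q) (l : Fin 5 → ℝ)
    (h0 : ∑ i, l i = 0) (h1 : ∑ i, l i • q i = 0) (h : ∀ k, l (src k) * l (tgt k) = 0) :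
    l = 0 := by
  have e0 : l 0 * l 2 = 0 := h 0
  have e1 : l 0 * l 3 = 0 := h 1
  have e2 : l 1 * l 2 = 0 := h 2
  have e3 : l 1 * l 3 = 0 := h 3
  have e4 : l 0 * l 4 = 0 := h 4
  have e5 : l 1 * l 4 = 0 := h 5
  have e6 : l 2 * l 4 = 0 := h 6
  have e7 : l 3 * l 4 = 0 := h 7
  simp only [Fin.sum_univ_five] at h0 h1
  have a4 : l 4 = 0 := by
    by_contra hne
    simp only [mul_eq_zero, hne, or_false] at e4 e5 e6 e7
    apply hne; linarith
  have a0 : l 0 = 0 := by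
    by_contra hne
    simp only [mul_eq_zero, hne, false_or] at e0 e1
    have b1 : l 1 = - l 0 := by linarith
    have : l 0 • (q 0 - q 1) = 0 := by
      rw [e0, e1, a4, b1] at h1; rw [← h1]; module
    have := (smul_eq_zero.1 this).resolve_left hne
    exact absurd (hq (sub_eq_zero.1 this)) (by decide)
  have a2 : l 2 = 0 := by
    by_contra hne
    simp only [mul_eq_zero, hne, or_false] at e2
    have b1 : l 3 = - l 2 := by linarith
    have : l 2 • (q 2 - q 3) = 0 := by
      rw [a0, e2, a4, b1] at h1; rw [← h1]; module
    have := (smul_eq_zero.1 this).resolve_left hne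
    exact absurd (hq (sub_eq_zero.1 this)) (by decide)
  have a13 : l 1 + l 3 = 0 := by linarith
  have a1 : l 1 = 0 := by
    have : l 1 * l 1 = 0 := by linear_combination l 1 * a13 - e3
    simpa using this
  have a3 : l 3 = 0 := by linarith
  funext i
  fin_cases i <;> assumption

theorem roofV_injective : ∀ r, Function.Injective (roofV r) := by
  unfold Function.Injective
  decide +kernel

/-- There are twelve roofs but only eleven hinges, so some nontrivial combination of the roof
stresses cancels on every hinge. -/
theorem not_linearIndependent_of_injective (p : Fin 34 → Fin 3 → ℝ) (hp : Function.Injective p) :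
    ¬ LinearIndependent ℝ (rows p) := by
  intro hli
  choose l hl0 hl1 hl2 using fun r => exists_affine_dep (fun i => p (roofV r i))
  -- `f c h` is the coefficient on hinge `h` of the combination `c` of the roof stresses
  let f : (Fin 12 → ℝ) →ₗ[ℝ] (Fin 11 → ℝ) :=
    ∑ r, ((l r 0 * l r 1) • (LinearMap.single ℝ (fun _ => ℝ) (lh r)) ∘ₗ LinearMap.proj r +
      (l r 2 * l r 3) • (LinearMap.single ℝ (fun _ => ℝ) (rh r)) ∘ₗ LinearMap.proj r)
  have hf : LinearMap.ker f ≠ ⊥ := LinearMap.ker_ne_bot_of_finrank_lt (by simp)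
  obtain ⟨c, hc, hc0⟩ := (Submodule.ne_bot_iff _).1 hf
  -- `T` sends the indicator of a hinge to its rigidity row
  let T : (Fin 11 → ℝ) →ₗ[ℝ] (Fin 34 → Fin 3 → ℝ) :=
    Fintype.linearCombination ℝ fun h => rigidityRow p (hv h 0) (hv h 1)
  have hT : ∀ h (x : ℝ), T (Pi.single h x) = x • rigidityRow p (hv h 0) (hv h 1) := fun h x =>
    Fintype.linearCombination_apply_single ..
  have hz : ∑ r, c r • ((l r 0 * l r 1) • rigidityRow p (hv (lh r) 0) (hv (lh r) 1) +
      (l r 2 * l r 3) • rigidityRow p (hv (rh r) 0) (hv (rh r) 1)) = 0 := by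
    have h : T (f c) = 0 := by rw [LinearMap.mem_ker.1 hc, map_zero]
    simp only [f, LinearMap.sum_apply, LinearMap.add_apply, LinearMap.smul_apply,
      LinearMap.comp_apply, LinearMap.proj_apply, LinearMap.single_apply, map_sum, map_add,
      map_smul, hT] at h
    rw [← h]
    refine Finset.sum_congr rfl fun r _ => ?_
    rw [smul_add, smul_comm (c r), smul_comm (c r)]
  have hsum : ∑ e : Fin 12 × Fin 8, (c e.1 * (l e.1 (src e.2) * l e.1 (tgt e.2))) • rows p e = 0 := by
    rw [Fintype.sum_prod_type]
    have : ∀ r, ∑ k, (c r * (l r (src k) * l r (tgt k))) • rows p (r, k) =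
        - c r • ((l r 0 * l r 1) • rigidityRow p (hv (lh r) 0) (hv (lh r) 1) +
        (l r 2 * l r 3) • rigidityRow p (hv (rh r) 0) (hv (rh r) 1)) := by
      intro r
      simp only [mul_smul (c r), ← Finset.smul_sum]
      refine (congrArg (c r • ·) (roof_stress p (roofV r) (l r) (hl1 r) (hl2 r))).trans ?_
      rw [smul_neg, neg_smul]
      rfl
    simp only [this, neg_smul, Finset.sum_neg_distrib, hz, neg_zero]
  have hcoef := Fintype.linearIndependent_iff.1 hli _ hsum
  apply hc0
  funext r
  by_contra hne
  refine hl0 r (roof_stress_ne_zero _ (hp.comp (roofV_injective r)) (l r) (hl1 r) (hl2 r) ?_)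
  intro k
  exact (mul_eq_zero.1 (hcoef (r, k))).resolve_left hne

/-- Linear independence is an open condition and injective placements are dense, so dependence
holds at every placement. -/
theorem not_linearIndependent (p : Fin 34 → Fin 3 → ℝ) : ¬ LinearIndependent ℝ (rows p) := by
  intro hli
  -- push the points apart along the first coordinate axis
  let P : ℝ → Fin 34 → Fin 3 → ℝ := fun t v => p v + t • fun _ => ((v : ℕ) : ℝ)
  have hcont : Continuous fun t => rows (P t) := by
    refine continuous_pi fun e => ?_
    simp only [rows, rigidityRow_eq, P]
    refine Continuous.sub ?_ ?_ <;>
      exact (continuous_single _).comp (by fun_prop)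
  have hopen : IsOpen {t | LinearIndependent ℝ (rows (P t))} :=
    isOpen_setOfPred_linearIndependent.preimage hcont
  have hmem : (0 : ℝ) ∈ {t | LinearIndependent ℝ (rows (P t))} := by simpa [P] using hli
  have hinf := infinite_of_mem_nhds (0 : ℝ) (hopen.mem_nhds hmem)
  refine hinf ((Set.finite_range fun uv : Fin 34 × Fin 34 =>
    (p uv.1 0 - p uv.2 0) / (((uv.2 : ℕ) : ℝ) - ((uv.1 : ℕ) : ℝ))).subset ?_)
  intro t ht
  by_contra hnot
  refine not_linearIndependent_of_injective (P t) (fun u v huv => ?_) ht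
  by_contra hne
  refine hnot ⟨(u, v), ?_⟩
  have hne' : ((v : ℕ) : ℝ) - ((u : ℕ) : ℝ) ≠ 0 := by
    rw [sub_ne_zero]
    exact fun h => hne (Fin.ext (Nat.cast_injective h).symm)
  have h0 := congrFun huv 0
  simp only [P, Pi.add_apply, Pi.smul_apply, smul_eq_mul] at h0
  rw [div_eq_iff hne']
  linarith

theorem rankAt_G_le (p : Fin 34 → Fin 3 → ℝ) : rankAt G p ≤ 95 := by
  have hset : {w : Fin 34 → Fin 3 → ℝ | ∃ i j, G.Adj i j ∧ w = rigidityRow p i j} =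
      Set.range (rows p) := by
    ext w
    constructor
    · rintro ⟨i, j, hij, rfl⟩
      obtain ⟨e, he⟩ := G_adj.1 hij
      refine ⟨e, ?_⟩
      rcases Sym2.eq_iff.1 he with ⟨rfl, rfl⟩ | ⟨rfl, rfl⟩
      · rfl
      · exact rigidityRow_comm ..
    · rintro ⟨e, rfl⟩
      exact ⟨_, _, G_adj.2 ⟨e, rfl⟩, rfl⟩
  rw [rankAt, hset]
  have h1 : (Set.range (rows p)).finrank ℝ ≤ Fintype.card (Fin 12 × Fin 8) :=
    finrank_range_le_card (rows p)
  have h2 : Fintype.card (Fin 12 × Fin 8) ≠ (Set.range (rows p)).finrank ℝ := fun h =>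
    not_linearIndependent p (linearIndependent_iff_card_eq_finrank_span.2 h)
  have h3 : Fintype.card (Fin 12 × Fin 8) = 96 := by simp
  change (Set.range (rows p)).finrank ℝ ≤ 95
  omega

/-! ### Sparsity -/

/-- Indicator of a vertex set. -/
def chi (S : Finset (Fin 34)) (v : Fin 34) : ℕ := if v ∈ S then 1 else 0

theorem numEdges_induce_le (S : Finset (Fin 34)) :
    numEdges (G.induce (S : Set (Fin 34))) ≤ ∑ e, chi S (eU e) * chi S (eV e) := by
  have hinj : Function.Injective (Sym2.map (Subtype.val : ↥(S : Set (Fin 34)) → Fin 34)) :=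
    Sym2.map.injective Subtype.val_injective
  rw [numEdges, ← Set.ncard_image_of_injective _ hinj]
  have hsub : Sym2.map Subtype.val '' (G.induce (S : Set (Fin 34))).edgeSet ⊆
      ((Finset.univ.filter fun e => eU e ∈ S ∧ eV e ∈ S).image fun e => s(eU e, eV e) :
        Finset (Sym2 (Fin 34))) := by
    rintro _ ⟨x, hx, rfl⟩
    induction x with
    | _ i j =>
      obtain ⟨e, he⟩ := G_adj.1 (show G.Adj i j from hx)
      simp only [Finset.coe_image, Set.mem_image, Finset.coe_filter, Finset.mem_univ, true_and]
      refine ⟨e, ?_, he⟩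
      rcases Sym2.eq_iff.1 he with ⟨h1, h2⟩ | ⟨h1, h2⟩
      · exact ⟨h1 ▸ i.2, h2 ▸ j.2⟩
      · exact ⟨h1 ▸ j.2, h2 ▸ i.2⟩
  refine (Set.ncard_le_ncard hsub (Finset.finite_toSet _)).trans ?_
  rw [Set.ncard_coe_finset]
  refine Finset.card_image_le.trans (le_of_eq ?_)
  rw [Finset.card_filter]
  refine Finset.sum_congr rfl fun e _ => ?_
  by_cases h1 : eU e ∈ S <;> by_cases h2 : eV e ∈ S <;> simp [chi, h1, h2]

/-- The number of vertices of `S` on a hinge. -/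
def hs (S : Finset (Fin 34)) (h : Fin 11) : ℕ := chi S (hv h 0) + chi S (hv h 1)

/-- The number of edges of a roof spanned when its hinges and apex contribute `a`, `b` and `t`
vertices. -/
def roofCount (a b t : ℕ) : ℕ := a * b + t * (a + b)

theorem sum_edges_eq (S : Finset (Fin 34)) :
    ∑ e, chi S (eU e) * chi S (eV e) =
      ∑ r, roofCount (hs S (lh r)) (hs S (rh r)) (chi S (apex r)) := by
  rw [Fintype.sum_prod_type]
  refine Finset.sum_congr rfl fun r _ => ?_
  simp only [Fin.sum_univ_eight, eU, eV, src, tgt, roofV, Matrix.cons_val, roofCount, hs]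
  ring

theorem card_eq_sum (S : Finset (Fin 34)) :
    S.card = ∑ h, hs S h + ∑ r, chi S (apex r) := by
  have h1 : S.card = ∑ v, chi S v := by simp [chi]
  have h2 : ∑ v, chi S v =
      ∑ i : Fin 22, chi S (Fin.castAdd 12 i) + ∑ r : Fin 12, chi S (Fin.natAdd 22 r) :=
    Fin.sum_univ_add (a := 22) (b := 12) (chi S)
  have h3 : ∑ i : Fin 22, chi S (Fin.castAdd 12 i) = ∑ x : Fin 11 × Fin 2, chi S (hv x.1 x.2) := by
    refine (Fintype.sum_equiv (finProdFinEquiv (m := 11) (n := 2)) _ _ fun x => ?_).symm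
    refine congrArg (chi S) (Fin.ext ?_)
    simp [hv, finProdFinEquiv, add_comm]
  rw [h1, h2, h3, Fintype.sum_prod_type]
  refine congrArg₂ (· + ·) (Finset.sum_congr rfl fun h _ => ?_) (Finset.sum_congr rfl fun r _ => ?_)
  · rw [Fin.sum_univ_two, hs]
  · exact congrArg (chi S) (Fin.ext rfl)

/-- The number of edges spanned in a path of four roofs by `a₀, …, a₄` hinge vertices and
`t₀, …, t₃` apices. -/
def pathCount (a₀ a₁ a₂ a₃ a₄ t₀ t₁ t₂ t₃ : ℕ) : ℕ :=
  roofCount a₀ a₁ t₀ + roofCount a₁ a₂ t₁ + roofCount a₂ a₃ t₂ + roofCount a₃ a₄ t₃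

/-- Lower bounds for `3k - E`, for a path of roofs with `a` and `b` vertices chosen on its end
hinges, `k` vertices chosen elsewhere, and `E` spanned edges. -/
def PathBound (a b k E : ℕ) : Prop :=
  E ≤ 3 * k + 2 ∧ (k ≤ 9 → E ≤ 3 * k + 1) ∧
  (a + b ≤ 3 → E ≤ 3 * k) ∧
  (a + b ≤ 2 → 1 ≤ k → E + 1 ≤ 3 * k) ∧
  (a + b ≤ 1 → (1 ≤ k → E + 2 ≤ 3 * k) ∧ (2 ≤ k → E + 3 ≤ 3 * k) ∧ (3 ≤ k → E + 4 ≤ 3 * k)) ∧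
  (a + b = 0 → (1 ≤ k → E + 3 ≤ 3 * k) ∧ (2 ≤ k → E + 5 ≤ 3 * k) ∧ (3 ≤ k → E + 6 ≤ 3 * k) ∧
    (5 ≤ k → E + 7 ≤ 3 * k))

instance (a b k E : ℕ) : Decidable (PathBound a b k E) := by unfold PathBound; infer_instance

set_option synthInstance.maxSize 2000 in
set_option synthInstance.maxHeartbeats 200000 in
/-- A check of all ways to choose the numbers of vertices on five hinges and four apices. -/
theorem pathBound : ∀ a₀ < 3, ∀ a₁ < 3, ∀ a₂ < 3, ∀ a₃ < 3, ∀ a₄ < 3, ∀ t₀ < 2, ∀ t₁ < 2,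
    ∀ t₂ < 2, ∀ t₃ < 2, PathBound a₀ a₄ (a₁ + a₂ + a₃ + t₀ + t₁ + t₂ + t₃)
      (pathCount a₀ a₁ a₂ a₃ a₄ t₀ t₁ t₂ t₃) := by
  decide +kernel

/-- Three paths sharing their end hinges. The case of full end hinges is the delicate one: they
contribute `3 * 4 = 12` and each path at least `-1`, or `-2` exactly when it is full, so the total
is at least `7` unless all 34 vertices are chosen. -/
theorem sparse_of_pathBound {a b k₁ k₂ k₃ E₁ E₂ E₃ : ℕ} (ha : a < 3) (hb : b < 3)
    (h₁ : PathBound a b k₁ E₁) (h₂ : PathBound a b k₂ E₂) (h₃ : PathBound a b k₃ E₃)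
    (hk₁ : k₁ ≤ 10) (hk₂ : k₂ ≤ 10) (hk₃ : k₃ ≤ 10) :
    (3 ≤ a + b + k₁ + k₂ + k₃ → E₁ + E₂ + E₃ + 6 ≤ 3 * (a + b + k₁ + k₂ + k₃)) ∧
    (5 ≤ a + b + k₁ + k₂ + k₃ → a + b + k₁ + k₂ + k₃ < 34 →
      E₁ + E₂ + E₃ + 7 ≤ 3 * (a + b + k₁ + k₂ + k₃)) := by
  obtain h | h | h | h | h : a + b = 4 ∨ a + b = 3 ∨ a + b = 2 ∨ a + b = 1 ∨ a + b = 0 := by omega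
  · obtain ⟨p₁, q₁, -⟩ := h₁
    obtain ⟨p₂, q₂, -⟩ := h₂
    obtain ⟨p₃, q₃, -⟩ := h₃
    omega
  · have r₁ := h₁.2.2.1 h.le
    have r₂ := h₂.2.2.1 h.le
    have r₃ := h₃.2.2.1 h.le
    omega
  · have r₁ := h₁.2.2.1 (by omega)
    have r₂ := h₂.2.2.1 (by omega)
    have r₃ := h₃.2.2.1 (by omega)
    have s₁ := h₁.2.2.2.1 h.le
    have s₂ := h₂.2.2.2.1 h.le
    have s₃ := h₃.2.2.2.1 h.le
    omega
  · have key : ∀ {k E}, PathBound a b k E → k = 0 ∧ E = 0 ∨ k = 1 ∧ E + 2 ≤ 3 * k ∨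
        k = 2 ∧ E + 3 ≤ 3 * k ∨ 3 ≤ k ∧ E + 4 ≤ 3 * k := by
      rintro k E ⟨-, -, h3, -, h5, -⟩
      omega
    rcases key h₁ with c₁ | c₁ | c₁ | c₁ <;> rcases key h₂ with c₂ | c₂ | c₂ | c₂ <;>
      rcases key h₃ with c₃ | c₃ | c₃ | c₃ <;> omega
  · have key : ∀ {k E}, PathBound a b k E → k = 0 ∧ E = 0 ∨ k = 1 ∧ E + 3 ≤ 3 * k ∨
        k = 2 ∧ E + 5 ≤ 3 * k ∨ 3 ≤ k ∧ k ≤ 4 ∧ E + 6 ≤ 3 * k ∨ 5 ≤ k ∧ E + 7 ≤ 3 * k := by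
      rintro k E ⟨-, -, h3, -, -, h6⟩
      omega
    rcases key h₁ with c₁ | c₁ | c₁ | c₁ | c₁ <;> rcases key h₂ with c₂ | c₂ | c₂ | c₂ | c₂ <;>
      rcases key h₃ with c₃ | c₃ | c₃ | c₃ | c₃ <;> omega

theorem chi_lt (S : Finset (Fin 34)) (v : Fin 34) : chi S v < 2 := by
  unfold chi; split <;> omega

theorem hs_lt (S : Finset (Fin 34)) (h : Fin 11) : hs S h < 3 := by
  have h1 := chi_lt S (hv h 0)
  have h2 := chi_lt S (hv h 1)
  unfold hs; omega

/-- Maxwell's count, with strict inequality for proper vertex subsets of size at least five. -/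
theorem induce_sparse (S : Finset (Fin 34)) :
    (3 ≤ S.card → numEdges (G.induce (S : Set (Fin 34))) + 6 ≤ 3 * S.card) ∧
    (5 ≤ S.card → S.card < 34 → numEdges (G.induce (S : Set (Fin 34))) + 7 ≤ 3 * S.card) := by
  have hE := numEdges_induce_le S
  rw [sum_edges_eq] at hE
  have hC := card_eq_sum S
  have ht : ∀ r, chi S (apex r) < 2 := fun r => chi_lt S _
  have hh := hs_lt S
  have b₁ := pathBound _ (hh 0) _ (hh 2) _ (hh 3) _ (hh 4) _ (hh 1) _ (ht 0) _ (ht 1) _ (ht 2)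
    _ (ht 3)
  have b₂ := pathBound _ (hh 0) _ (hh 5) _ (hh 6) _ (hh 7) _ (hh 1) _ (ht 4) _ (ht 5) _ (ht 6)
    _ (ht 7)
  have b₃ := pathBound _ (hh 0) _ (hh 8) _ (hh 9) _ (hh 10) _ (hh 1) _ (ht 8) _ (ht 9) _ (ht 10)
    _ (ht 11)
  have hk : ∀ h₁ h₂ h₃ r₁ r₂ r₃ r₄, hs S h₁ + hs S h₂ + hs S h₃ + chi S (apex r₁) +
      chi S (apex r₂) + chi S (apex r₃) + chi S (apex r₄) ≤ 10 := by
    intro h₁ h₂ h₃ r₁ r₂ r₃ r₄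
    have := hh h₁; have := hh h₂; have := hh h₃
    have := ht r₁; have := ht r₂; have := ht r₃; have := ht r₄
    omega
  have key := sparse_of_pathBound (hh 0) (hh 1) b₁ b₂ b₃ (hk ..) (hk ..) (hk ..)
  have hC' : S.card = hs S 0 + hs S 1 +
      (hs S 2 + hs S 3 + hs S 4 + chi S (apex 0) + chi S (apex 1) + chi S (apex 2) +
        chi S (apex 3)) +
      (hs S 5 + hs S 6 + hs S 7 + chi S (apex 4) + chi S (apex 5) + chi S (apex 6) +
        chi S (apex 7)) +
      (hs S 8 + hs S 9 + hs S 10 + chi S (apex 8) + chi S (apex 9) + chi S (apex 10) +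
        chi S (apex 11)) := by
    rw [hC]
    simp [Fin.sum_univ_succ, Fin.succ]
    ring
  have hE' : ∑ r, roofCount (hs S (lh r)) (hs S (rh r)) (chi S (apex r)) =
      pathCount (hs S 0) (hs S 2) (hs S 3) (hs S 4) (hs S 1) (chi S (apex 0)) (chi S (apex 1))
        (chi S (apex 2)) (chi S (apex 3)) +
      pathCount (hs S 0) (hs S 5) (hs S 6) (hs S 7) (hs S 1) (chi S (apex 4)) (chi S (apex 5))
        (chi S (apex 6)) (chi S (apex 7)) +
      pathCount (hs S 0) (hs S 8) (hs S 9) (hs S 10) (hs S 1) (chi S (apex 8)) (chi S (apex 9))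
        (chi S (apex 10)) (chi S (apex 11)) := by
    simp [Fin.sum_univ_succ, lh, rh, pathCount, Fin.succ]
    ring
  rw [← hC'] at key
  rw [hE'] at hE
  exact ⟨fun h => (Nat.add_le_add_right hE 6).trans (key.1 h),
    fun h h' => (Nat.add_le_add_right hE 7).trans (key.2 h h')⟩

end RoofTheta

/-- **Maxwell's counting condition is insufficient for 3D rigidity even without
nucleation**: there is a nucleation-free graph all of whose subgraphs on `n ≥ 3`
vertices satisfy Maxwell's count `|E′| ≤ 3n − 6`, having exactly `3|V| − 6` edges,
and yet not rigid (hence dependent) in ℝ³.  (Since a subgraph on a vertex set `S` has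
at most as many edges as the subgraph induced on `S`, Maxwell's count for all
subgraphs is stated via induced subgraphs.) -/
theorem maxwell_insufficient_without_nucleation :
    ∃ (m : ℕ) (G : SimpleGraph (Fin m)),
      NucleationFree G ∧
      (∀ S : Finset (Fin m), 3 ≤ S.card →
        numEdges (G.induce (S : Set (Fin m))) ≤ 3 * S.card - 6) ∧
      numEdges G = 3 * m - 6 ∧
      genRank G < 3 * m - 6 := by
  refine ⟨34, RoofTheta.G, ?_, ?_, RoofTheta.numEdges_G, ?_⟩
  · intro S hS
    by_cases hlt : S.card < 34
    · have h1 := (RoofTheta.induce_sparse S).2 hS hlt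
      have h2 := RoofTheta.genRank_le_numEdges (RoofTheta.G.induce (S : Set (Fin 34)))
      have h3 : genRank (RoofTheta.G.induce (S : Set (Fin 34))) < 3 * S.card - 6 := by omega
      exact h3.ne
    · have hSu : S = Finset.univ := by
        rw [← Finset.card_eq_iff_eq_univ, Fintype.card_fin]
        have := S.card_le_univ
        rw [Fintype.card_fin] at this
        omega
      subst hSu
      have e : RoofTheta.G.induce ((Finset.univ : Finset (Fin 34)) : Set (Fin 34)) ≃g
          RoofTheta.G :=
        { toEquiv := Equiv.subtypeUnivEquiv (by simp)
          map_rel_iff' := by intros; rfl }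
      have h := RoofTheta.genRank_congr_le e 95 RoofTheta.rankAt_G_le
      rw [Finset.card_univ, Fintype.card_fin]
      intro h'
      have h'' := h'.symm.trans_le h
      omega
  · intro S hS
    have := (RoofTheta.induce_sparse S).1 hS
    omega
  · have := RoofTheta.genRank_le RoofTheta.G 95 RoofTheta.rankAt_G_le
    omega
end
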